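/- arXiv:2207.00393 — 12 statements merged into one kernel-verified Lean document; each statement's English description precedes it below -/
import Mathlib

section
/- Let p ≥ 0 be an integer and a_1,…,a_p, b ∈ ℂ, with b + j ≠ 0 for every integer j ≥ 1. Let v : ℕ → ℂ be any sequence satisfying v_{n+1} = ((n+1)/(n+b+1))·v_n for all n ∈ ℕ. Then for every n ∈ ℕ, (Q_p v)_n = [ (a_1−b)(a_2−b)⋯(a_p−b) / ((n+b+1)(n+b+2)⋯(n+b+p)) ] · v_n. (This is the computation, from the proof of Lemma 2.1, of the remainder R_{p,b}(n) of the right division of Q_p by S_n − (n+1)/(n+b+1).) -/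
noncomputable section

open Finset

/-- Pochhammer symbol `(a)_k = a (a+1) ⋯ (a+k-1)`, with `(a)_0 = 1`. -/
def poch (a : ℂ) : ℕ → ℂ
  | 0 => 1
  | k + 1 => poch a k * (a + k)

/-- The first-order recurrence operator `T_j` with parameter `aj`:
`(T u)_n = ((n + aj + j)/(n+1)) u_{n+1} - u_n`. -/
def Trec (aj : ℂ) (j : ℕ) (u : ℕ → ℂ) : ℕ → ℂ := fun n =>
  (((n : ℂ) + aj + j) / ((n : ℂ) + 1)) * u (n + 1) - u n

/-- `Q_p = T_p ∘ T_{p-1} ∘ ⋯ ∘ T_1`, where `T_j` has parameter `a_j = a (j-1)`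
(for `p = 0`, `Q_0` is the identity). -/
def Qop (a : ℕ → ℂ) : ℕ → (ℕ → ℂ) → (ℕ → ℂ)
  | 0 => id
  | p + 1 => Trec (a p) (p + 1) ∘ Qop a p

/-- Computation of the remainder `R_{p,b}(n)` of the right division of `Q_p` by
`S_n - (n+1)/(n+b+1)` (from the proof of Lemma 2.1): if
`v_{n+1} = ((n+1)/(n+b+1)) v_n` for all `n`, then
`(Q_p v)_n = ((a_1-b)⋯(a_p-b) / ((n+b+1)⋯(n+b+p))) v_n`. -/
theorem remainder_of_Qp (p : ℕ) (a : ℕ → ℂ) (b : ℂ)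
    (hb : ∀ j : ℕ, b + (j + 1 : ℂ) ≠ 0)
    (v : ℕ → ℂ)
    (hv : ∀ n : ℕ, v (n + 1) = (((n : ℂ) + 1) / ((n : ℂ) + b + 1)) * v n) :
    ∀ n : ℕ,
      Qop a p v n =
        ((∏ i ∈ range p, (a i - b)) / (∏ i ∈ range p, ((n : ℂ) + b + 1 + i))) * v n := by
  induction p with
  | zero => intro n; simp [Qop]
  | succ p ih =>
    intro n
    have hne : ∀ m i : ℕ, (m : ℂ) + b + 1 + i ≠ 0 := by
      intro m i h
      apply hb (m + i)
      push_cast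
      linear_combination h
    have hD : ∀ m : ℕ, (∏ i ∈ range p, ((m : ℂ) + b + 1 + i)) ≠ 0 := fun m =>
      Finset.prod_ne_zero_iff.mpr (fun i _ => hne m i)
    have key : (∏ i ∈ range p, (((n + 1 : ℕ) : ℂ) + b + 1 + i)) * ((n : ℂ) + b + 1) =
        (∏ i ∈ range p, ((n : ℂ) + b + 1 + i)) * ((n : ℂ) + b + 1 + p) := by
      rw [← Finset.prod_range_succ (fun i : ℕ => (n : ℂ) + b + 1 + i), Finset.prod_range_succ']
      congr 1
      · apply Finset.prod_congr rfl
        intro i _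
        push_cast
        ring
      · simp
    have h1 := hD n
    have h2 := hD (n + 1)
    have h3 : (n : ℂ) + b + 1 ≠ 0 := by simpa using hne n 0
    have h4 := hne n p
    have h5 : (n : ℂ) + 1 ≠ 0 := Nat.cast_add_one_ne_zero n
    change ((n : ℂ) + a p + ((p + 1 : ℕ) : ℂ)) / ((n : ℂ) + 1) * Qop a p v (n + 1)
      - Qop a p v n = _
    rw [ih (n + 1), ih n, hv n, Finset.prod_range_succ, Finset.prod_range_succ]
    generalize (∏ i ∈ range p, (((n + 1 : ℕ) : ℂ) + b + 1 + i)) = E at *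
    generalize (∏ i ∈ range p, ((n : ℂ) + b + 1 + i)) = D at *
    generalize (∏ i ∈ range p, (a i - b)) = A at *
    have hE : E = D * ((n : ℂ) + b + 1 + p) / ((n : ℂ) + b + 1) := by
      rw [eq_div_iff h3, key]
    rw [hE]
    push_cast
    field_simp
    ring
end
end

section
/- Let p ≥ 1 be an integer and a_1,…,a_p ∈ ℂ with a_i + j ≠ 0 for every i ∈ {1,…,p} and every integer j ≥ 1. For each i, let v^{(i)} : ℕ → ℂ satisfy v^{(i)}_{n+1} = ((n+1)/(n+a_i+1))·v^{(i)}_n for all n ∈ ℕ (for instance v^{(i)}_n = n!/(a_i+1)_n). Then Q_p annihilates each v^{(i)}: for every i ∈ {1,…,p} and every n ∈ ℕ, (Q_p v^{(i)})_n = 0. (Part of Lemma 2.1: Q_p is a common left multiple of the operators ((n+a_i+1)/(n+1))S_n − 1.) -/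
noncomputable section

open Finset

lemma Trec_of_rec (a b : ℂ) (k : ℕ) (w : ℕ → ℂ)
    (hw : ∀ n : ℕ, ((n : ℂ) + b + k + 1) * w (n + 1) = ((n : ℂ) + 1) * w n) (n : ℕ) :
    ((n : ℂ) + 1) * Trec a (k + 1) w n = (a - b) * w (n + 1) := by
  have h1 : (n : ℂ) + 1 ≠ 0 := Nat.cast_add_one_ne_zero n
  have h := hw n
  unfold Trec
  push_cast
  field_simp
  linear_combination h

lemma Qop_rec (a : ℕ → ℂ) (b : ℂ) (v : ℕ → ℂ)
    (hv : ∀ n : ℕ, ((n : ℂ) + b + 1) * v (n + 1) = ((n : ℂ) + 1) * v n) (k : ℕ) :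
    ∀ n : ℕ, ((n : ℂ) + b + k + 1) * Qop a k v (n + 1) = ((n : ℂ) + 1) * Qop a k v n := by
  induction k with
  | zero => intro n; simpa [Qop] using hv n
  | succ k ih =>
    intro n
    have e1 := Trec_of_rec (a k) b k _ ih n
    have e2 := Trec_of_rec (a k) b k _ ih (n + 1)
    have e3 := ih (n + 1)
    have h2 : ((n + 1 : ℕ) : ℂ) + 1 ≠ 0 := Nat.cast_add_one_ne_zero (n + 1)
    simp only [Qop, Function.comp]
    apply mul_left_cancel₀ h2
    push_cast at *
    linear_combination ((n : ℂ) + b + k + 2) * e2 + (a k - b) * e3 - ((n : ℂ) + 2) * e1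

lemma Qop_zero (a : ℕ → ℂ) (i : ℕ) (v : ℕ → ℂ)
    (hv : ∀ n : ℕ, ((n : ℂ) + a i + 1) * v (n + 1) = ((n : ℂ) + 1) * v n) (k : ℕ)
    (hk : i + 1 ≤ k) : ∀ n : ℕ, Qop a k v n = 0 := by
  induction k, hk using Nat.le_induction with
  | base =>
    intro n
    have e := Trec_of_rec (a i) (a i) i _ (Qop_rec a (a i) v hv i) n
    have h1 : (n : ℂ) + 1 ≠ 0 := Nat.cast_add_one_ne_zero n
    simpa [h1, Qop] using e
  | succ k hk ih =>
    intro n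
    simp [Qop, Trec, ih]

/-- Part of Lemma 2.1: `Q_p` is a common left multiple of the operators
`((n+a_i+1)/(n+1)) S_n - 1`; it annihilates every sequence `v` with
`v_{n+1} = ((n+1)/(n+a_i+1)) v_n`. -/
theorem Qp_annihilates (p : ℕ) (hp : 1 ≤ p) (a : ℕ → ℂ)
    (ha : ∀ i < p, ∀ j : ℕ, a i + (j + 1 : ℂ) ≠ 0)
    (v : ℕ → ℕ → ℂ)
    (hv : ∀ i < p, ∀ n : ℕ,
      v i (n + 1) = (((n : ℂ) + 1) / ((n : ℂ) + a i + 1)) * v i n) :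
    ∀ i < p, ∀ n : ℕ, Qop a p (v i) n = 0 := by
  intro i hi
  refine Qop_zero a i (v i) (fun n => ?_) p hi
  have h : (n : ℂ) + a i + 1 ≠ 0 := by
    have := ha i hi n
    intro h0
    apply this
    linear_combination h0
  rw [hv i hi n]
  field_simp
end
end

section
/- Let p ≥ 1 be an integer and a_1,…,a_p ∈ ℂ pairwise distinct with a_i + j ≠ 0 for every i and every integer j ≥ 1. For each i, let v^{(i)} : ℕ → ℂ be defined by v^{(i)}_0 = 1 and v^{(i)}_{n+1} = ((n+1)/(n+a_i+1))·v^{(i)}_n (so v^{(i)}_n = n!/(a_i+1)_n). Then no nonzero recurrence operator of order less than p with rational function coefficients annihilates all of v^{(1)},…,v^{(p)}: if r_0,…,r_{p−1} ∈ ℂ(n) are rational functions such that Σ_{m=0}^{p−1} r_m(n)·v^{(i)}_{n+m} = 0 for all sufficiently large n and all i ∈ {1,…,p}, then r_0 = ⋯ = r_{p−1} = 0. (This is the minimality part of Lemma 2.1: Q_p, which has order p and annihilates all the v^{(i)}, is the least common left multiple of the operators ((n+a_i+1)/(n+1))S_n − 1.) -/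
noncomputable section

open Finset

/-- The sequence `v^{(i)}` with `v^{(i)}_0 = 1` and
`v^{(i)}_{n+1} = ((n+1)/(n+a_i+1)) v^{(i)}_n`, i.e. `v^{(i)}_n = n!/(a_i+1)_n`. -/
def vseq (ai : ℂ) : ℕ → ℂ
  | 0 => 1
  | n + 1 => (((n : ℂ) + 1) / ((n : ℂ) + ai + 1)) * vseq ai n

open Polynomial in
/-- Auxiliary polynomial `∑_{m ≤ q} c_m ∏_{m ≤ k < q} (X + k)`. -/
def auxQ (c : ℕ → ℂ) : ℕ → Polynomial ℂ
  | 0 => C (c 0)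
  | q + 1 => (X + C (q : ℂ)) * auxQ c q + C (c (q + 1))

open Polynomial in
lemma auxQ_natDegree (c : ℕ → ℂ) (q : ℕ) : (auxQ c q).natDegree ≤ q := by
  induction q with
  | zero => simp [auxQ]
  | succ q ih =>
    rw [auxQ]
    refine (natDegree_add_C).le.trans (natDegree_mul_le.trans ?_)
    rw [natDegree_X_add_C]
    omega

open Polynomial in
lemma auxQ_zero (c : ℕ → ℂ) (q : ℕ) (h : auxQ c q = 0) : ∀ m ≤ q, c m = 0 := by
  induction q with
  | zero =>
    intro m hm
    obtain rfl : m = 0 := by omega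
    simpa [auxQ] using h
  | succ q ih =>
    have h1 : c (q + 1) = 0 := by
      have := congrArg (eval (-(q : ℂ))) h
      simpa [auxQ] using this
    have h2 : auxQ c q = 0 := by
      rw [auxQ, h1, C_0, add_zero] at h
      exact (mul_eq_zero.1 h).resolve_left (X_add_C_ne_zero _)
    intro m hm
    rcases Nat.lt_or_ge q m with h3 | h3
    · obtain rfl : m = q + 1 := by omega
      exact h1
    · exact ih h2 m h3

lemma den_ne {ai : ℂ} (ha : ∀ j : ℕ, ai + (j + 1 : ℂ) ≠ 0) (n : ℕ) : (n : ℂ) + ai + 1 ≠ 0 := by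
  have := ha n
  intro h
  apply this
  rw [← h]; ring

lemma vseq_ne {ai : ℂ} (ha : ∀ j : ℕ, ai + (j + 1 : ℂ) ≠ 0) (n : ℕ) : vseq ai n ≠ 0 := by
  induction n with
  | zero => simp [vseq]
  | succ n ih =>
    rw [vseq]
    exact mul_ne_zero (div_ne_zero (by exact_mod_cast Nat.succ_ne_zero n) (den_ne ha n)) ih

lemma poch_nat_ne (n m : ℕ) : poch ((n : ℂ) + 1) m ≠ 0 := by
  induction m with
  | zero => simp [poch]
  | succ m ih =>
    rw [poch]
    refine mul_ne_zero ih ?_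
    have : ((n + 1 + m : ℕ) : ℂ) ≠ 0 := Nat.cast_ne_zero.2 (by omega)
    push_cast at this
    exact this

lemma vseq_poch {ai : ℂ} (ha : ∀ j : ℕ, ai + (j + 1 : ℂ) ≠ 0) (n m : ℕ) :
    vseq ai (n + m) * poch ((n : ℂ) + ai + 1) m = vseq ai n * poch ((n : ℂ) + 1) m := by
  induction m with
  | zero => simp [poch]
  | succ m ih =>
    have h := den_ne ha (n + m)
    rw [← add_assoc, vseq, poch, poch]
    have e : (n : ℂ) + ai + 1 + m = ((n + m : ℕ) : ℂ) + ai + 1 := by push_cast; ring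
    rw [e]
    calc _ = (((n + m : ℕ) : ℂ) + 1) * (vseq ai (n + m) * poch ((n : ℂ) + ai + 1) m) := by
            field_simp
      _ = _ := by rw [ih]; push_cast; ring

lemma sum_eq_auxQ {ai : ℂ} (ha : ∀ j : ℕ, ai + (j + 1 : ℂ) ≠ 0) (n : ℕ) (e : ℕ → ℂ) (q : ℕ) :
    (∑ m ∈ range (q + 1), e m * vseq ai (n + m)) * poch ((n : ℂ) + ai + 1) q =
      vseq ai n * (auxQ (fun m => e m * poch ((n : ℂ) + 1) m) q).eval ((n : ℂ) + ai + 1) := by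
  induction q with
  | zero => simp [poch, auxQ, mul_comm]
  | succ q ih =>
    rw [sum_range_succ, add_mul, mul_assoc (e (q + 1)), vseq_poch ha, poch, ← mul_assoc, ih]
    simp only [auxQ, Polynomial.eval_add, Polynomial.eval_mul, Polynomial.eval_X,
      Polynomial.eval_C]
    ring

lemma ratFunc_zero (f : RatFunc ℂ) (N : ℕ)
    (h : ∀ n : ℕ, N ≤ n → RatFunc.eval (RingHom.id ℂ) (n : ℂ) f = 0) : f = 0 := by
  have h0 : f.num * f.denom = 0 := by
    apply Polynomial.eq_zero_of_infinite_isRoot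
    refine ((Set.Ici_infinite N).image (Nat.cast_injective (R := ℂ)).injOn).mono ?_
    rintro _ ⟨n, hn, rfl⟩
    have := h n hn
    rw [RatFunc.eval, div_eq_zero_iff] at this
    simpa [Polynomial.IsRoot, Polynomial.eval₂_id] using this
  exact RatFunc.num_eq_zero_iff.1 ((mul_eq_zero.1 h0).resolve_right f.denom_ne_zero)

/-- Minimality part of Lemma 2.1: no nonzero recurrence operator of order less
than `p` with rational-function coefficients annihilates all of
`v^{(1)}, …, v^{(p)}`. -/
theorem no_lower_order_annihilator (p : ℕ) (hp : 1 ≤ p) (a : ℕ → ℂ)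
    (hdist : ∀ i < p, ∀ j < p, i ≠ j → a i ≠ a j)
    (ha : ∀ i < p, ∀ j : ℕ, a i + (j + 1 : ℂ) ≠ 0)
    (r : ℕ → RatFunc ℂ)
    (hrel : ∃ N : ℕ, ∀ n : ℕ, N ≤ n → ∀ i < p,
      ∑ m ∈ range p, RatFunc.eval (RingHom.id ℂ) (n : ℂ) (r m) * vseq (a i) (n + m) = 0) :
    ∀ m < p, r m = 0 := by
  obtain ⟨N, hN⟩ := hrel
  obtain ⟨q, rfl⟩ : ∃ q, p = q + 1 := ⟨p - 1, by omega⟩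
  intro m hm
  apply ratFunc_zero _ N
  intro n hn
  set e : ℕ → ℂ := fun m => RatFunc.eval (RingHom.id ℂ) (n : ℂ) (r m) with he
  have hQ : auxQ (fun m => e m * poch ((n : ℂ) + 1) m) q = 0 := by
    refine Polynomial.eq_zero_of_natDegree_lt_card_of_eval_eq_zero
      (ι := Fin (q + 1)) _ (f := fun i => (n : ℂ) + a i + 1) ?_ ?_ ?_
    · intro i j hij
      by_contra hne
      refine hdist i i.2 j j.2 (fun h => hne (Fin.ext h)) ?_
      simpa using hij
    · intro i
      have h1 := sum_eq_auxQ (ha i i.2) n e q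
      rw [hN n hn i i.2, zero_mul] at h1
      exact (mul_eq_zero.1 h1.symm).resolve_left (vseq_ne (ha i i.2) n)
    · rw [Fintype.card_fin]
      exact Nat.lt_succ_of_le (auxQ_natDegree _ _)
  have := auxQ_zero _ q hQ m (by omega)
  exact (mul_eq_zero.1 this).resolve_right (poch_nat_ne n m)
end
end

section
/- Let p ≥ 0 be an integer and a_1,…,a_p ∈ ℂ arbitrary (not depending on n). For n ∈ ℕ and 0 ≤ m ≤ p such that n + m + a_i ≠ 0 for all i ∈ {1,…,p}, define c_m(n) = Σ_{k=0}^{p−m} [ (m−p)_k / k! ] · Π_{i=1}^{p} (n+m+a_i+k)/(n+m+a_i) (a terminating hypergeometric sum, equal to the value at 1 of the series {}_{p+1}F_p with upper parameters m−p, n+m+a_1+1, …, n+m+a_p+1 and lower parameters n+m+a_1, …, n+m+a_p). Then for every sequence u : ℕ → ℂ and every n ∈ ℕ such that n + m + a_i ≠ 0 for all i and all 0 ≤ m ≤ p, (Q_p u)_n = Σ_{m=0}^{p} [ c_m(n)/(p−m)! ] · [ Π_{i=1}^{p} (n+a_i+m) / Π_{i=1}^{m} (n+i) ] · u_{n+m}.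 (Lemma 2.2: explicit expansion of Q_p in powers of the shift.) -/
noncomputable section

open Finset

/-- The terminating hypergeometric sum
`c_m(n) = Σ_{k=0}^{p−m} ((m−p)_k / k!) Π_{i=1}^{p} (n+m+a_i+k)/(n+m+a_i)`,
the value at 1 of `_{p+1}F_p` with upper parameters `m−p, n+m+a_1+1, …, n+m+a_p+1`
and lower parameters `n+m+a_1, …, n+m+a_p`. -/
def ccoef (a : ℕ → ℂ) (p m : ℕ) (n : ℂ) : ℂ :=
  ∑ k ∈ range (p - m + 1),
    poch ((m : ℂ) - (p : ℂ)) k / (Nat.factorial k : ℂ) *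
      ∏ i ∈ range p, (n + m + a i + k) / (n + m + a i)

/-- Scaled finite difference of `∏ (x + a i)`. -/
def Sdiff (a : ℕ → ℂ) (p q : ℕ) (x : ℂ) : ℂ :=
  ∑ k ∈ range (q + 1), (-1 : ℂ) ^ k / ((Nat.factorial k : ℂ) * (Nat.factorial (q - k) : ℂ)) *
    ∏ i ∈ range p, (x + a i + k)

lemma Sdiff_zero (a : ℕ → ℂ) (p : ℕ) (x : ℂ) :
    Sdiff a (p + 1) 0 x = (x + a p) * Sdiff a p 0 x := by
  simp [Sdiff, prod_range_succ]
  ring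

lemma Sdiff_succ (a : ℕ → ℂ) (p q : ℕ) (x : ℂ) :
    Sdiff a (p + 1) (q + 1) x =
      (x + a p + (q + 1)) * Sdiff a p (q + 1) x - Sdiff a p q x := by
  unfold Sdiff
  rw [sum_range_succ _ (q + 1), sum_range_succ _ (q + 1), mul_add, mul_sum]
  have key : ∀ k ∈ range (q + 1),
      (-1 : ℂ) ^ k / ((Nat.factorial k : ℂ) * (Nat.factorial (q + 1 - k) : ℂ)) *
        ∏ i ∈ range (p + 1), (x + a i + k) =
      (x + a p + (q + 1)) * ((-1 : ℂ) ^ k /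
        ((Nat.factorial k : ℂ) * (Nat.factorial (q + 1 - k) : ℂ)) *
        ∏ i ∈ range p, (x + a i + k)) -
      (-1 : ℂ) ^ k / ((Nat.factorial k : ℂ) * (Nat.factorial (q - k) : ℂ)) *
        ∏ i ∈ range p, (x + a i + k) := by
    intro k hk
    have hk' : k ≤ q := by simpa [Nat.lt_succ_iff] using hk
    obtain ⟨r, rfl⟩ := Nat.exists_eq_add_of_le hk'
    have e1 : k + r + 1 - k = r + 1 := by omega
    have e2 : k + r - k = r := by omega
    rw [e1, e2, prod_range_succ, Nat.factorial_succ]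
    have h1 : (Nat.factorial k : ℂ) ≠ 0 := by exact_mod_cast Nat.factorial_ne_zero k
    have h2 : (Nat.factorial r : ℂ) ≠ 0 := by exact_mod_cast Nat.factorial_ne_zero r
    have h3 : (r : ℂ) + 1 ≠ 0 := by exact_mod_cast Nat.succ_ne_zero r
    push_cast
    field_simp
    ring
  rw [sum_congr rfl key, sum_sub_distrib, prod_range_succ]
  push_cast
  ring

lemma Sdiff_vanish (a : ℕ → ℂ) (p : ℕ) : ∀ (q : ℕ) (x : ℂ), p < q → Sdiff a p q x = 0 := by
  induction p with
  | zero =>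
    intro q x hq
    have h0 := Int.alternating_sum_range_choose_of_ne (n := q) (by omega)
    have h1 : ∑ k ∈ range (q + 1), (-1 : ℂ) ^ k * (q.choose k : ℂ) = 0 := by
      exact_mod_cast h0
    have hq0 : (Nat.factorial q : ℂ) ≠ 0 := by exact_mod_cast Nat.factorial_ne_zero q
    have h2 : Sdiff a 0 q x = (∑ k ∈ range (q + 1), (-1 : ℂ) ^ k * (q.choose k : ℂ)) /
        (Nat.factorial q : ℂ) := by
      unfold Sdiff
      rw [sum_div]
      refine sum_congr rfl fun k hk => ?_
      have hk' : k ≤ q := by simpa [Nat.lt_succ_iff] using hk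
      rw [Nat.cast_choose ℂ hk']
      simp
      field_simp
    rw [h2, h1, zero_div]
  | succ p ih =>
    intro q x hq
    obtain ⟨r, rfl⟩ : ∃ r, q = r + 1 := ⟨q - 1, by omega⟩
    rw [Sdiff_succ, ih _ _ (by omega), ih _ _ (by omega)]
    ring

lemma poch_neg (q k : ℕ) (hk : k ≤ q) :
    poch (-(q : ℂ)) k = (-1) ^ k * (Nat.factorial q : ℂ) / (Nat.factorial (q - k) : ℂ) := by
  induction k with
  | zero =>
    have hq0 : (Nat.factorial q : ℂ) ≠ 0 := by exact_mod_cast Nat.factorial_ne_zero q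
    simp [poch, hq0]
  | succ k ih =>
    obtain ⟨r, rfl⟩ := Nat.exists_eq_add_of_le hk
    have e1 : k + 1 + r - k = r + 1 := by omega
    have e2 : k + 1 + r - (k + 1) = r := by omega
    rw [poch, ih (by omega), e1, e2, Nat.factorial_succ r]
    have h2 : (Nat.factorial r : ℂ) ≠ 0 := by exact_mod_cast Nat.factorial_ne_zero r
    have h3 : (r : ℂ) + 1 ≠ 0 := by exact_mod_cast Nat.succ_ne_zero r
    push_cast
    field_simp
    ring

lemma Qop_eq (a : ℕ → ℂ) (u : ℕ → ℂ) (p : ℕ) : ∀ n : ℕ, Qop a p u n =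
    ∑ m ∈ range (p + 1), Sdiff a p (p - m) ((n : ℂ) + m) /
      (∏ i ∈ range m, ((n : ℂ) + (i + 1 : ℂ))) * u (n + m) := by
  induction p with
  | zero => intro n; simp [Qop, Sdiff]
  | succ p ih =>
    intro n
    have hrec : ∀ m ∈ range (p + 1), Sdiff a (p + 1) (p + 1 - m) ((n : ℂ) + m) /
        (∏ i ∈ range m, ((n : ℂ) + (i + 1 : ℂ))) * u (n + m) =
        ((n : ℂ) + a p + (p + 1)) * (Sdiff a p (p + 1 - m) ((n : ℂ) + m) /
        (∏ i ∈ range m, ((n : ℂ) + (i + 1 : ℂ))) * u (n + m)) -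
        Sdiff a p (p - m) ((n : ℂ) + m) /
        (∏ i ∈ range m, ((n : ℂ) + (i + 1 : ℂ))) * u (n + m) := by
      intro m hm
      have hm' : m ≤ p := by simpa [Nat.lt_succ_iff] using hm
      obtain ⟨r, rfl⟩ := Nat.exists_eq_add_of_le hm'
      have e1 : m + r + 1 - m = r + 1 := by omega
      have e2 : m + r - m = r := by omega
      rw [e1, e2, Sdiff_succ]
      push_cast
      ring
    have hlast : Sdiff a (p + 1) (p + 1 - (p + 1)) ((n : ℂ) + (p + 1 : ℕ)) /
        (∏ i ∈ range (p + 1), ((n : ℂ) + (i + 1 : ℂ))) * u (n + (p + 1)) =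
        ((n : ℂ) + a p + (p + 1)) *
        (Sdiff a p (p + 1 - (p + 1)) ((n : ℂ) + (p + 1 : ℕ)) /
        (∏ i ∈ range (p + 1), ((n : ℂ) + (i + 1 : ℂ))) * u (n + (p + 1))) := by
      rw [Nat.sub_self, Sdiff_zero]
      push_cast
      ring
    rw [sum_range_succ _ (p + 1), sum_congr rfl hrec, hlast, sum_sub_distrib, ← mul_sum,
      sub_add_eq_add_sub, ← mul_add, ← sum_range_succ (fun m => Sdiff a p (p + 1 - m)
        ((n : ℂ) + m) / (∏ i ∈ range m, ((n : ℂ) + (i + 1 : ℂ))) * u (n + m)) (p + 1),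
      sum_range_succ' _ (p + 1), ← ih n, Sdiff_vanish a p (p + 1 - 0) _ (by omega)]
    simp only [Qop, Function.comp, Trec]
    rw [ih (n + 1), zero_div, zero_mul, add_zero, mul_sum, mul_sum]
    congr 1
    refine sum_congr rfl fun m _ => ?_
    have e1 : p + 1 - (m + 1) = p - m := by omega
    have e2 : n + 1 + m = n + (m + 1) := by omega
    have e3 : ((n + 1 : ℕ) : ℂ) + m = (n : ℂ) + ((m + 1 : ℕ) : ℂ) := by push_cast; ring
    have e4 : ∏ i ∈ range (m + 1), ((n : ℂ) + (i + 1 : ℂ)) =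
        (∏ i ∈ range m, (((n + 1 : ℕ) : ℂ) + (i + 1 : ℂ))) * ((n : ℂ) + 1) := by
      rw [prod_range_succ']
      congr 1
      · refine prod_congr rfl fun i _ => ?_
        push_cast; ring
      · simp
    rw [e1, e2, e3, e4, ← div_div]
    push_cast
    ring

lemma ccoef_eq (p m : ℕ) (hm : m ≤ p) (a : ℕ → ℂ) (n : ℂ)
    (h : ∀ i < p, n + m + a i ≠ 0) :
    ccoef a p m n / (Nat.factorial (p - m) : ℂ) * (∏ i ∈ range p, (n + a i + m)) =
      Sdiff a p (p - m) (n + m) := by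
  unfold ccoef Sdiff
  rw [sum_div, sum_mul]
  refine sum_congr rfl fun k hk => ?_
  have hk' : k ≤ p - m := by simpa [Nat.lt_succ_iff] using hk
  have e : (m : ℂ) - p = -((p - m : ℕ) : ℂ) := by rw [Nat.cast_sub hm]; ring
  have hP : ∏ i ∈ range p, (n + m + a i) ≠ 0 :=
    prod_ne_zero_iff.mpr fun i hi => h i (mem_range.mp hi)
  have e2 : ∏ i ∈ range p, (n + a i + m) = ∏ i ∈ range p, (n + m + a i) :=
    prod_congr rfl fun i _ => by ring
  rw [e, poch_neg _ _ hk', prod_div_distrib, e2]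
  have h1 : (Nat.factorial k : ℂ) ≠ 0 := by exact_mod_cast Nat.factorial_ne_zero k
  have h2 : (Nat.factorial (p - m) : ℂ) ≠ 0 := by exact_mod_cast Nat.factorial_ne_zero _
  have h3 : (Nat.factorial (p - m - k) : ℂ) ≠ 0 := by exact_mod_cast Nat.factorial_ne_zero _
  field_simp

/-- Lemma 2.2: explicit expansion of `Q_p` in powers of the shift:
`(Q_p u)_n = Σ_{m=0}^{p} (c_m(n)/(p−m)!) (Π_{i=1}^{p}(n+a_i+m) / Π_{i=1}^{m}(n+i)) u_{n+m}`. -/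
theorem Qp_expansion (p : ℕ) (a : ℕ → ℂ) (u : ℕ → ℂ) (n : ℕ)
    (hden : ∀ m ≤ p, ∀ i < p, (n : ℂ) + m + a i ≠ 0) :
    Qop a p u n =
      ∑ m ∈ range (p + 1),
        ccoef a p m (n : ℂ) / (Nat.factorial (p - m) : ℂ) *
          ((∏ i ∈ range p, ((n : ℂ) + a i + m)) / (∏ i ∈ range m, ((n : ℂ) + (i + 1 : ℂ)))) *
          u (n + m) := by
  rw [Qop_eq]
  refine sum_congr rfl fun m hm => ?_
  have hm' : m ≤ p := by simpa [Nat.lt_succ_iff] using hm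
  rw [← ccoef_eq p m hm' a n (hden m hm'), mul_div_assoc]
end
end

section
/- (Key identity, Eq. (3.4) of the proof of the main theorem.) Let ε∈{0,1}, ε₁,ε₂∈{−1,1} (with ε₁ = 1 whenever ε = 0), m a positive integer, and λ, μ ∈ ℂ. Then for every n ∈ ℕ, k ∈ ℕ, c ∈ ℂ and integer i ≥ 1 such that the quantities n+εμ, n+λ+ε₂mk, n+λ−ε₂mc, n+i−1+λ+ε₂mk and n+i−1+λ−ε₂mc are all nonzero, one has a(n,k)/α(n,k) − a(n,−c)·α(n+i−1,−c)/(α(n,−c)·α(n+i−1,k)) = (k+c)·B_i(n,c). -/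
noncomputable section

/-- `a(n,k) = ((n+λ)/(n+εμ)) ((n+ε(μ+ε₁mk))/(n+λ+ε₂mk))`. -/
def afun (e e1 e2 : ℂ) (m : ℕ) (lam mu : ℂ) (n k : ℂ) : ℂ :=
  ((n + lam) / (n + e * mu)) * ((n + e * (mu + e1 * m * k)) / (n + lam + e2 * m * k))

/-- `α(n,k) = 1/(n+λ+ε₂mk)`. -/
def alphafun (e2 : ℂ) (m : ℕ) (lam : ℂ) (n k : ℂ) : ℂ :=
  1 / (n + lam + e2 * m * k)

/-- `C_i(n) = ((n+λ)/(n+εμ)) (n+εμ−εε₁ε₂(λ+n+i))`. -/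
def Cfun (e e1 e2 : ℂ) (lam mu : ℂ) (i n : ℂ) : ℂ :=
  ((n + lam) / (n + e * mu)) * (n + e * mu - e * e1 * e2 * (lam + n + i))

/-- `B_i(n,c) = −m ε₂ α(n+i−1,−c) C_{i−1}(n)`. -/
def Bfun (e e1 e2 : ℂ) (m : ℕ) (lam mu : ℂ) (i n c : ℂ) : ℂ :=
  -(m : ℂ) * e2 * alphafun e2 m lam (n + i - 1) (-c) * Cfun e e1 e2 lam mu (i - 1) n

/-- Key identity (Eq. (3.4) of the proof of the main theorem):
`a(n,k)/α(n,k) − a(n,−c) α(n+i−1,−c)/(α(n,−c) α(n+i−1,k)) = (k+c) B_i(n,c)`. -/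
theorem key_identity (e e1 e2 : ℂ) (he : e = 0 ∨ e = 1)
    (he1 : e1 = -1 ∨ e1 = 1) (he2 : e2 = -1 ∨ e2 = 1)
    (hee1 : e = 0 → e1 = 1)
    (m : ℕ) (hm : 1 ≤ m) (lam mu : ℂ)
    (n k : ℕ) (c : ℂ) (i : ℕ) (hi : 1 ≤ i)
    (h1 : (n : ℂ) + e * mu ≠ 0)
    (h2 : (n : ℂ) + lam + e2 * m * k ≠ 0)
    (h3 : (n : ℂ) + lam - e2 * m * c ≠ 0)
    (h4 : (n : ℂ) + i - 1 + lam + e2 * m * k ≠ 0)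
    (h5 : (n : ℂ) + i - 1 + lam - e2 * m * c ≠ 0) :
    afun e e1 e2 m lam mu n k / alphafun e2 m lam n k -
      afun e e1 e2 m lam mu n (-c) * alphafun e2 m lam ((n : ℂ) + i - 1) (-c) /
        (alphafun e2 m lam n (-c) * alphafun e2 m lam ((n : ℂ) + i - 1) k) =
      ((k : ℂ) + c) * Bfun e e1 e2 m lam mu i n c := by
  have h3' : (n : ℂ) + lam + e2 * m * (-c) ≠ 0 := by
    intro h; apply h3; rw [← h]; ring
  have h5' : (n : ℂ) + i - 1 + lam + e2 * m * (-c) ≠ 0 := by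
    intro h; apply h5; rw [← h]; ring
  have hsq : e2 * e2 = 1 := by
    rcases he2 with h | h <;> rw [h] <;> norm_num
  have e_left : afun e e1 e2 m lam mu n k / alphafun e2 m lam n k
      = ((n : ℂ) + lam) / (n + e * mu) * (n + e * (mu + e1 * m * k)) := by
    unfold afun alphafun
    generalize ((n : ℂ) + lam) / (n + e * mu) = P
    generalize (n : ℂ) + lam + e2 * m * k = X at *
    field_simp
  have e_mid : afun e e1 e2 m lam mu n (-c) * alphafun e2 m lam ((n : ℂ) + i - 1) (-c) /
        (alphafun e2 m lam n (-c) * alphafun e2 m lam ((n : ℂ) + i - 1) k)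
      = ((n : ℂ) + lam) / (n + e * mu) * (n + e * (mu + e1 * m * (-c)))
        * ((n : ℂ) + i - 1 + lam + e2 * m * k) / ((n : ℂ) + i - 1 + lam + e2 * m * (-c)) := by
    unfold afun alphafun
    generalize ((n : ℂ) + lam) / (n + e * mu) = P
    generalize (n : ℂ) + lam + e2 * m * (-c) = X at *
    generalize (n : ℂ) + i - 1 + lam + e2 * m * (-c) = Y at *
    generalize (n : ℂ) + i - 1 + lam + e2 * m * k = Z at *
    field_simp
  rw [e_left, e_mid]
  unfold Bfun Cfun alphafun
  generalize ((n : ℂ) + lam) / (n + e * mu) = P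
  rw [sub_eq_iff_eq_add, ← mul_left_inj' h5', add_mul, div_mul_cancel₀ _ h5']
  have e_r : ∀ Y A B Q : ℂ, Y ≠ 0 → A * (B * (1 / Y) * Q) * Y = A * B * Q := by
    intro Y A B Q hY
    field_simp
  rw [e_r _ _ _ _ h5']
  linear_combination (-P * e * e1 * m * (k + c) * (n + i - 1 + lam)) * hsq
end
end

section
/- (Eq. (3.8), first line, of the proof of the main theorem.) Let ε∈{0,1}, ε₁,ε₂∈{−1,1} (with ε₁ = 1 whenever ε = 0), m a positive integer, and λ, μ ∈ ℂ. Let U : ℕ × ℕ → ℂ satisfy U(n+1,k) = a(n,k)·U(n,k) for all n, k ∈ ℕ, and set φ_i(n,k) = Π_{j=0}^{i−1} α(n+j,k) (with φ_0 = 1). Then for every c ∈ ℂ, every integer i ≥ 1, and every n, k ∈ ℕ such that B_i(n,c) ≠ 0 and all the quantities n+εμ, n+j+λ+ε₂mk (0 ≤ j ≤ i−1), n+λ−ε₂mc and n+i−1+λ−ε₂mc are nonzero, one has (1/B_i(n,c))·( φ_{i−1}(n+1,k)·U(n+1,k) − (a(n,−c)·α(n+i−1,−c)/α(n,−c))·φ_{i−1}(n,k)·U(n,k)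 ) = (k+c)·φ_i(n,k)·U(n,k); that is, the operator ℱ_{c,i} maps the sequence n ↦ φ_{i−1}(n,k)·U(n,k) to the sequence n ↦ (k+c)·φ_i(n,k)·U(n,k). -/
noncomputable section

open Finset

/-- `φ_i(n,k) = Π_{j=0}^{i−1} α(n+j,k)`, with `φ_0 = 1`. -/
def phifun (e2 : ℂ) (m : ℕ) (lam : ℂ) (i : ℕ) (n k : ℂ) : ℂ :=
  ∏ j ∈ range i, alphafun e2 m lam (n + j) k

/-- Eq. (3.8), first line, of the proof of the main theorem: the operator
`ℱ_{c,i}` maps the sequence `n ↦ φ_{i−1}(n,k) U(n,k)` to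
`n ↦ (k+c) φ_i(n,k) U(n,k)`. -/
theorem Fci_action (e e1 e2 : ℂ) (he : e = 0 ∨ e = 1)
    (he1 : e1 = -1 ∨ e1 = 1) (he2 : e2 = -1 ∨ e2 = 1)
    (hee1 : e = 0 → e1 = 1)
    (m : ℕ) (hm : 1 ≤ m) (lam mu : ℂ)
    (U : ℕ → ℕ → ℂ)
    (hU : ∀ n k : ℕ, U (n + 1) k = afun e e1 e2 m lam mu n k * U n k)
    (c : ℂ) (i : ℕ) (hi : 1 ≤ i) (n k : ℕ)
    (hB : Bfun e e1 e2 m lam mu i n c ≠ 0)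
    (h1 : (n : ℂ) + e * mu ≠ 0)
    (h2 : ∀ j : ℕ, j ≤ i - 1 → (n : ℂ) + j + lam + e2 * m * k ≠ 0)
    (h3 : (n : ℂ) + lam - e2 * m * c ≠ 0)
    (h4 : (n : ℂ) + i - 1 + lam - e2 * m * c ≠ 0) :
    (1 / Bfun e e1 e2 m lam mu i n c) *
        (phifun e2 m lam (i - 1) ((n : ℂ) + 1) k * U (n + 1) k -
          (afun e e1 e2 m lam mu n (-c) * alphafun e2 m lam ((n : ℂ) + i - 1) (-c) /
              alphafun e2 m lam n (-c)) *
            phifun e2 m lam (i - 1) n k * U n k) =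
      ((k : ℂ) + c) * phifun e2 m lam i n k * U n k := by
  obtain ⟨p, rfl⟩ : ∃ p, i = p + 1 := ⟨i - 1, by omega⟩
  have hsq : e2 ^ 2 = 1 := by rcases he2 with h | h <;> simp [h]
  rw [one_div, inv_mul_eq_iff_eq_mul₀ hB, hU]
  simp only [Nat.add_sub_cancel] at h2 ⊢
  have hX := h2 0 (Nat.zero_le _)
  have hY := h2 p le_rfl
  simp only [Nat.cast_zero, add_zero] at hX
  have hX' : (n : ℂ) + lam + e2 * m * (-c) ≠ 0 := by
    intro h; apply h3; rw [← h]; ring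
  have hY' : (n : ℂ) + p + lam + e2 * m * (-c) ≠ 0 := by
    intro h; apply h4; rw [← h]; push_cast; ring
  have e1' : phifun e2 m lam p n k
      = ((n : ℂ) + p + lam + e2 * m * k) * phifun e2 m lam (p + 1) n k := by
    unfold phifun
    rw [prod_range_succ]
    generalize ∏ j ∈ range p, alphafun e2 m lam ((n : ℂ) + j) k = P
    unfold alphafun
    field_simp
  have e2' : phifun e2 m lam p ((n : ℂ) + 1) k
      = ((n : ℂ) + lam + e2 * m * k) * phifun e2 m lam (p + 1) n k := by
    unfold phifun
    rw [prod_range_succ']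
    have : ∀ j : ℕ, (n : ℂ) + ((j + 1 : ℕ) : ℂ) = (n : ℂ) + 1 + j := by
      intro j; push_cast; ring
    simp only [this]
    generalize ∏ j ∈ range p, alphafun e2 m lam ((n : ℂ) + 1 + j) k = P
    unfold alphafun
    simp only [Nat.cast_zero, add_zero]
    field_simp
  rw [e1', e2']
  have hidx : (n : ℂ) + ((p + 1 : ℕ) : ℂ) - 1 = n + p := by push_cast; ring
  have hidx2 : ((p + 1 : ℕ) : ℂ) - 1 = p := by push_cast; ring
  unfold Bfun
  rw [hidx, hidx2]
  generalize phifun e2 m lam (p + 1) n k = P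
  generalize U n k = V
  have key : ((n : ℂ) + lam + e2 * m * k) * afun e e1 e2 m lam mu n k
      - afun e e1 e2 m lam mu n (-c) * alphafun e2 m lam ((n : ℂ) + p) (-c) /
        alphafun e2 m lam n (-c) * ((n : ℂ) + p + lam + e2 * m * k)
      = -(m : ℂ) * e2 * alphafun e2 m lam ((n : ℂ) + p) (-c) * Cfun e e1 e2 lam mu p n
        * ((k : ℂ) + c) := by
    have a1 : ((n : ℂ) + lam + e2 * m * k) * afun e e1 e2 m lam mu n k
        = ((n : ℂ) + lam) / (n + e * mu) * (n + e * (mu + e1 * m * k)) := by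
      unfold afun
      generalize ((n : ℂ) + lam) / (n + e * mu) = r
      field_simp
    have a2 : afun e e1 e2 m lam mu n (-c) * alphafun e2 m lam ((n : ℂ) + p) (-c) /
        alphafun e2 m lam n (-c)
        = ((n : ℂ) + lam) / (n + e * mu) * (n + e * (mu + e1 * m * (-c)))
          / ((n : ℂ) + p + lam + e2 * m * (-c)) := by
      unfold afun alphafun
      generalize ((n : ℂ) + lam) / (n + e * mu) = r
      generalize (n : ℂ) + lam + e2 * m * (-c) = X at *
      generalize (n : ℂ) + p + lam + e2 * m * (-c) = Y at *
      field_simp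
    rw [a1, a2]
    unfold alphafun Cfun
    generalize ((n : ℂ) + lam) / (n + e * mu) = r
    generalize hYd : (n : ℂ) + p + lam + e2 * m * (-c) = Y at *
    field_simp
    rw [← hYd]
    linear_combination (-(r * m * e * e1 * (lam + n + p) * (k + c))) * hsq
  linear_combination P * V * key
end
end

section
/- (Proposition 6.1.) Let (φ_n)_{n∈ℕ} be a sequence of formal power series in ℂ[[x]]. Assume: (X) there exist integers m, ℓ ≥ 0 and polynomials A_0,…,A_m, B_0,…,B_ℓ ∈ ℂ[n], with A_0,…,A_m not all zero, such that Σ_{i=0}^{m} A_i(n)·x·φ_{n+i} = Σ_{j=0}^{ℓ} B_j(n)·φ_{n+j} for all n ∈ ℕ; and (M) there exist a nonzero polynomial π ∈ ℂ[x], integers s, t ≥ 0 and polynomials E_{−s},…,E_t ∈ ℂ[n] such that π(x)·φ_n' = Σ_{j=−s}^{t} E_j(n)·φ_{n+j} for all n ≥ s, where ' denotes the formal derivative with respect to x. Then (D): there exist integers r, u ≥ 0 and polynomials C_0,…,C_r, D_0,…,D_u ∈ ℂ[n], with C_0,…,C_r not all zero, such that for all sufficiently large n, ( Σ_{i=0}^{r}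 C_i(n)·φ_{n+i} )' = Σ_{j=0}^{u} D_j(n)·φ_{n+j}. -/
noncomputable section

open Finset PowerSeries Polynomial

namespace XMD

/-- Operators: `∑ A_i(n) S^i`, stored as polynomials in `S` over `ℂ[n]`. -/
abbrev Op := Polynomial (Polynomial ℂ)

abbrev V := PowerSeries ℂ

/-- the shift `n ↦ n + i` on coefficients -/
def sh (i : ℕ) : Polynomial ℂ →+* Polynomial ℂ :=
  Polynomial.compRingHom (Polynomial.X + Polynomial.C (i : ℂ))

lemma sh_eval (i : ℕ) (p : Polynomial ℂ) (n : ℕ) :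
    (sh i p).eval (n : ℂ) = p.eval ((n + i : ℕ) : ℂ) := by
  simp [sh, Polynomial.eval_comp]

lemma sh_inj (i : ℕ) : Function.Injective (sh i) := by
  intro p q h
  have := congrArg (fun r => r.comp (Polynomial.X - Polynomial.C (i : ℂ))) h
  simpa [sh, Polynomial.comp_assoc] using this

/-- product of operators, linear in the left factor -/
def mul (B : Op) : Op →ₗ[Polynomial ℂ] Op :=
  Polynomial.lsum fun i => LinearMap.toSpanSingleton (Polynomial ℂ) Op
    (Polynomial.X ^ i * B.map (sh i))

lemma mul_monomial (B : Op) (i : ℕ) (a : Polynomial ℂ) :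
    mul B (Polynomial.monomial i a) = a • (Polynomial.X ^ i * B.map (sh i)) := by
  simp [mul, Polynomial.lsum_apply, Polynomial.sum_monomial_index]

lemma mul_eq (A B : Op) : mul B A =
    ∑ i ∈ range (A.natDegree + 1), A.coeff i • (Polynomial.X ^ i * B.map (sh i)) := by
  conv_lhs => rw [A.as_sum_range]
  rw [map_sum]
  simp [mul_monomial]

lemma coeff_mul (A B : Op) : (mul B A).coeff (A.natDegree + B.natDegree) =
    A.leadingCoeff * sh A.natDegree B.leadingCoeff := by
  rw [mul_eq, Polynomial.finsetSum_coeff, Finset.sum_eq_single A.natDegree]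
  · rw [Polynomial.coeff_smul, add_comm, Polynomial.coeff_X_pow_mul, Polynomial.coeff_map]
    rfl
  · intro i hi hne
    have hi' : i < A.natDegree := by
      have := Finset.mem_range.1 hi
      omega
    rw [Polynomial.coeff_smul, Polynomial.coeff_eq_zero_of_natDegree_lt (p := Polynomial.X ^ i * B.map (sh i)), smul_zero]
    calc _ ≤ _ := Polynomial.natDegree_mul_le
      _ ≤ i + B.natDegree := by
        gcongr
        · simp
        · exact Polynomial.natDegree_map_le
      _ < _ := by omega
  · simp

lemma mul_ne_zero' {A B : Op} (hA : A ≠ 0) (hB : B ≠ 0) : mul B A ≠ 0 := by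
  intro h
  have := coeff_mul A B
  rw [h, Polynomial.coeff_zero] at this
  have h2 := mul_eq_zero.1 this.symm
  rcases h2 with h2 | h2
  · exact hA (Polynomial.leadingCoeff_eq_zero.1 h2)
  · rw [map_eq_zero_iff _ (sh_inj _)] at h2
    exact hB (Polynomial.leadingCoeff_eq_zero.1 h2)

lemma mul_mem (A B : Op) (k : ℕ) (hA : A ∈ Polynomial.degreeLT (Polynomial ℂ) (k + 1))
    (hB : B.natDegree ≤ k) : mul B A ∈ Polynomial.degreeLT (Polynomial ℂ) (2 * k + 1) := by
  rw [mul_eq]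
  refine Submodule.sum_mem _ fun i hi => Submodule.smul_mem _ _ ?_
  have hA' : A.natDegree ≤ k := by
    rw [Polynomial.mem_degreeLT] at hA
    by_cases h : A = 0
    · simp [h]
    · have := (Polynomial.natDegree_lt_iff_degree_lt h).2 hA
      omega
  have hi' := Finset.mem_range.1 hi
  rw [Polynomial.mem_degreeLT]
  refine lt_of_le_of_lt (Polynomial.degree_le_natDegree) ?_
  have : (Polynomial.X ^ i * B.map (sh i) : Op).natDegree ≤ i + B.natDegree := by
    refine Polynomial.natDegree_mul_le.trans ?_
    gcongr
    · simp
    · exact Polynomial.natDegree_map_le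
  exact_mod_cast (by omega)

lemma not_inj {R M N : Type*} [CommRing R] [Nontrivial R] [AddCommMonoid M] [Module R M]
    [AddCommMonoid N] [Module R N] {k : ℕ} (e : M ≃ₗ[R] (Fin (k + 1) → R))
    (e' : N ≃ₗ[R] (Fin (2 * k + 1) → R)) (f : M × M →ₗ[R] N) : ¬ Function.Injective f := by
  intro hinj
  let g := e'.toLinearMap ∘ₗ f ∘ₗ (LinearEquiv.prodCongr e.symm e.symm).toLinearMap ∘ₗ
    (LinearEquiv.sumArrowLequivProdArrow (Fin (k + 1)) (Fin (k + 1)) R R).toLinearMap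
  have hg : Function.Injective g := by
    refine e'.injective.comp (hinj.comp ?_)
    exact (LinearEquiv.prodCongr e.symm e.symm).injective.comp
      (LinearEquiv.sumArrowLequivProdArrow (Fin (k + 1)) (Fin (k + 1)) R R).injective
  have := card_le_of_injective R g hg
  simp at this
  omega

/-- Left Ore condition. -/
lemma ore (Q A : Op) (hA : A ≠ 0) : ∃ U W : Op, U ≠ 0 ∧ mul Q U = mul A W := by
  set k := max Q.natDegree A.natDegree with hk
  let e := Polynomial.degreeLTEquiv (Polynomial ℂ) (k + 1)
  let e' := Polynomial.degreeLTEquiv (Polynomial ℂ) (2 * k + 1)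
  let D := Polynomial.degreeLT (Polynomial ℂ) (k + 1)
  let f : D × D →ₗ[Polynomial ℂ] Polynomial.degreeLT (Polynomial ℂ) (2 * k + 1) :=
    LinearMap.codRestrict _
      ((mul Q ∘ₗ D.subtype ∘ₗ LinearMap.fst _ D D) -
        (mul A ∘ₗ D.subtype ∘ₗ LinearMap.snd _ D D)) (by
      rintro ⟨u, w⟩
      exact Submodule.sub_mem _ (mul_mem _ _ _ u.2 (le_max_left _ _))
        (mul_mem _ _ _ w.2 (le_max_right _ _)))
  have hf : ¬ Function.Injective f := not_inj e e' f
  rw [injective_iff_map_eq_zero] at hf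
  push Not at hf
  obtain ⟨⟨u, w⟩, h0, hne⟩ := hf
  have h1 : mul Q u.1 - mul A w.1 = 0 := congrArg Subtype.val h0
  have h2 := sub_eq_zero.1 h1
  refine ⟨u.1, w.1, ?_, h2⟩
  intro hu
  rw [hu, map_zero] at h2
  have hw : w.1 = 0 := by
    by_contra hw
    exact mul_ne_zero' hw hA h2.symm
  apply hne
  ext1
  · exact Subtype.ext hu
  · exact Subtype.ext hw

/-- action on sequences -/
def act (f : ℕ → V) : Op →+ (ℕ → V) where
  toFun A := fun n => A.sum fun i a => a.eval (n : ℂ) • f (n + i)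
  map_zero' := by
    funext n
    simp
  map_add' A B := by
    funext n
    exact Polynomial.sum_add_index A B _ (by simp) (by intros; simp [add_smul])

lemma act_monomial (f : ℕ → V) (i : ℕ) (a : Polynomial ℂ) (n : ℕ) :
    act f (Polynomial.monomial i a) n = a.eval (n : ℂ) • f (n + i) := by
  simp [act, Polynomial.sum_monomial_index]

lemma act_range (f : ℕ → V) (A : Op) (n : ℕ) :
    act f A n = ∑ i ∈ range (A.natDegree + 1), (A.coeff i).eval (n : ℂ) • f (n + i) := by
  simp only [act, AddMonoidHom.coe_mk, ZeroHom.coe_mk]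
  exact Polynomial.sum_over_range A (by simp)

lemma act_sum (f : ℕ → V) (m : ℕ) (A : ℕ → Polynomial ℂ) (n : ℕ) :
    act f (∑ i ∈ range m, Polynomial.monomial i (A i)) n =
      ∑ i ∈ range m, (A i).eval (n : ℂ) • f (n + i) := by
  rw [map_sum, Finset.sum_apply]
  simp [act_monomial]

lemma act_map (T : V →ₗ[ℂ] V) (f : ℕ → V) (A : Op) :
    act (fun n => T (f n)) A = fun n => T (act f A n) := by
  funext n
  simp [act_range]

lemma act_mul (f : ℕ → V) (A B : Op) : act f (mul B A) = act (act f B) A := by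
  induction A using Polynomial.induction_on' with
  | add p q hp hq => simp [hp, hq]
  | monomial i a =>
    rw [mul_monomial]
    funext n
    rw [act_monomial]
    induction B using Polynomial.induction_on' with
    | add p q hp hq =>
      simp only [Polynomial.map_add, mul_add, smul_add, map_add, Pi.add_apply, hp, hq]
    | monomial j b =>
      rw [act_monomial, Polynomial.map_monomial, Polynomial.X_pow_mul_monomial,
        Polynomial.smul_monomial, act_monomial]
      rw [smul_eq_mul, Polynomial.eval_mul, sh_eval, mul_smul, add_assoc, add_comm j i]

/-- multiplication by a power series -/
def mu (p : V) : V →ₗ[ℂ] V := LinearMap.mulLeft ℂ p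

lemma act_mu (p : V) (f : ℕ → V) (A : Op) :
    act (fun n => p * f n) A = fun n => p * act f A n := act_map (mu p) f A

def Good (φ : ℕ → V) (p : V) : Prop :=
  ∃ P Q : Op, P ≠ 0 ∧ act (fun n => p * φ n) P = act φ Q

lemma good_add (φ : ℕ → V) (p q : V) (hp : Good φ p) (hq : Good φ q) : Good φ (p + q) := by
  obtain ⟨P, Q, hP, h⟩ := hp
  obtain ⟨P', Q', hP', h'⟩ := hq
  obtain ⟨U, W, hU, hUW⟩ := ore P P' hP'
  refine ⟨mul P U, mul Q U + mul Q' W, mul_ne_zero' hU hP, ?_⟩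
  rw [map_add, act_mul φ U, act_mul φ W, ← h, ← h', ← act_mul, ← act_mul, ← hUW]
  rw [act_mu, act_mu, act_mu]
  funext n
  simp [add_mul]

lemma one_ne : (Polynomial.monomial 0 1 : Op) ≠ 0 := by simp

lemma good_C (φ : ℕ → V) (c : ℂ) : Good φ (PowerSeries.C c) := by
  refine ⟨Polynomial.monomial 0 1, Polynomial.monomial 0 (Polynomial.C c), one_ne, ?_⟩
  funext n
  rw [act_monomial, act_monomial]
  simp [PowerSeries.smul_eq_C_mul]

lemma good_mul_X (φ : ℕ → V) (hX : Good φ PowerSeries.X) (p : V) (hp : Good φ p) :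
    Good φ (p * PowerSeries.X) := by
  obtain ⟨P, Q, hP, h⟩ := hp
  obtain ⟨A, B, hA, h'⟩ := hX
  obtain ⟨U, W, hU, hUW⟩ := ore Q A hA
  refine ⟨mul P U, mul B W, mul_ne_zero' hU hP, ?_⟩
  have e1 : act (fun n => p * PowerSeries.X * φ n) P
      = act (fun n => PowerSeries.X * φ n) Q := by
    rw [act_mu, act_mu, ← h, act_mu]
    funext n
    ring
  rw [act_mul, e1, ← act_mul, hUW, act_mul, h', ← act_mul]

lemma good_poly (φ : ℕ → V) (hX : Good φ PowerSeries.X) (p : Polynomial ℂ) :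
    Good φ (p : V) := by
  induction p using Polynomial.induction_on with
  | C a => simpa using good_C φ a
  | add p q hp hq => simpa using good_add φ _ _ hp hq
  | monomial n a h =>
    have := good_mul_X φ hX _ h
    convert this using 1
    simp [pow_succ, mul_assoc]

end XMD

/-- Proposition 6.1: if a family `(φ_n)` of formal power series satisfies a
relation of type (X) (a linear recurrence in `n` whose coefficients are
polynomials of degree at most 1 in `x`) and a relation of type (M) (a mixed
difference-differential equation `π(x) φ_n' = Σ E_j(n) φ_{n+j}`), then it
satisfies a relation of type (D): `(Σ C_i(n) φ_{n+i})' = Σ D_j(n) φ_{n+j}`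
for all sufficiently large `n`. -/
theorem X_and_M_imply_D (φ : ℕ → PowerSeries ℂ)
    (hX : ∃ (m ℓ : ℕ) (A B : ℕ → Polynomial ℂ),
      (¬ ∀ i ≤ m, A i = 0) ∧
      ∀ n : ℕ,
        ∑ i ∈ range (m + 1), (A i).eval (n : ℂ) • (PowerSeries.X * φ (n + i)) =
          ∑ j ∈ range (ℓ + 1), (B j).eval (n : ℂ) • φ (n + j))
    (hM : ∃ (π : Polynomial ℂ) (s t : ℕ) (E : ℤ → Polynomial ℂ),
      π ≠ 0 ∧
      ∀ n : ℕ, s ≤ n →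
        (π : PowerSeries ℂ) * PowerSeries.derivativeFun (φ n) =
          ∑ j ∈ Finset.Icc (-(s : ℤ)) (t : ℤ),
            (E j).eval (n : ℂ) • φ ((n : ℤ) + j).toNat) :
    ∃ (r u : ℕ) (C D : ℕ → Polynomial ℂ),
      (¬ ∀ i ≤ r, C i = 0) ∧
      ∃ N : ℕ, ∀ n : ℕ, N ≤ n →
        PowerSeries.derivativeFun
            (∑ i ∈ range (r + 1), (C i).eval (n : ℂ) • φ (n + i)) =
          ∑ j ∈ range (u + 1), (D j).eval (n : ℂ) • φ (n + j) := by
  obtain ⟨m, ℓ, A, B, hA, hAB⟩ := hX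
  obtain ⟨π, s, t, E, hπ, hE⟩ := hM
  have hgX : XMD.Good φ PowerSeries.X := by
    refine ⟨∑ i ∈ range (m + 1), Polynomial.monomial i (A i),
      ∑ i ∈ range (ℓ + 1), Polynomial.monomial i (B i), ?_, ?_⟩
    · intro h
      apply hA
      intro i hi
      have h2 := congrArg (fun p => Polynomial.coeff p i) h
      simpa [Polynomial.finsetSum_coeff, Polynomial.coeff_monomial, Nat.lt_succ_iff, hi] using h2
    · funext n
      rw [XMD.act_sum, XMD.act_sum]
      exact hAB n
  have hπ' : (π : PowerSeries ℂ) ≠ 0 := by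
    simpa using hπ
  let d : PowerSeries ℂ →ₗ[ℂ] PowerSeries ℂ := (PowerSeries.derivative ℂ).toLinearMap
  have hd : ∀ p, d p = PowerSeries.derivativeFun p := fun p => rfl
  suffices H : ∃ C D : XMD.Op, C ≠ 0 ∧
      XMD.act (fun n => d (φ n)) C = XMD.act φ D by
    obtain ⟨C, D, hC, hCD⟩ := H
    refine ⟨C.natDegree, D.natDegree, C.coeff, D.coeff, ?_, 0, ?_⟩
    · intro h
      exact hC (Polynomial.leadingCoeff_eq_zero.1 (h _ le_rfl))
    · intro n _
      rw [← XMD.act_range, ← XMD.act_range, ← hCD, XMD.act_map]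
      rfl
  obtain ⟨P, Q, hP, hPQ⟩ := XMD.good_poly φ hgX π
  by_cases hQ : Q = 0
  · refine ⟨P, 0, hP, ?_⟩
    rw [XMD.act_map]
    have h0 : ∀ n, XMD.act φ P n = 0 := by
      intro n
      rw [XMD.act_mu, hQ, map_zero] at hPQ
      have := congrFun hPQ n
      simpa [hπ'] using this
    funext n
    simp [h0]
  · -- shifted version of (M)
    let F : XMD.Op := ∑ i ∈ range (s + t + 1),
      Polynomial.monomial i (XMD.sh s (E ((i : ℤ) - s)))
    have hF : XMD.act (fun n => (π : PowerSeries ℂ) * d (φ n)) (Polynomial.monomial s 1)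
        = XMD.act φ F := by
      funext n
      rw [XMD.act_monomial, XMD.act_sum, Polynomial.eval_one, one_smul, hd,
        hE (n + s) (by omega)]
      symm
      refine Finset.sum_bij (fun i _ => (i : ℤ) - s) ?_ ?_ ?_ ?_
      · intro i hi
        have := Finset.mem_range.1 hi
        rw [Finset.mem_Icc]
        omega
      · intro i _ j _ h
        omega
      · intro j hj
        rw [Finset.mem_Icc] at hj
        refine ⟨(j + s).toNat, ?_, ?_⟩
        · rw [Finset.mem_range]
          omega
        · omega
      · intro i hi
        rw [XMD.sh_eval]
        congr 2
        omega
    obtain ⟨U, W, hU, hUW⟩ := XMD.ore F Q hQ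
    refine ⟨XMD.mul (Polynomial.monomial s 1) U, XMD.mul P W,
      XMD.mul_ne_zero' hU (by simp), ?_⟩
    have key : (fun n => (π : PowerSeries ℂ) * XMD.act (fun n => d (φ n))
        (XMD.mul (Polynomial.monomial s 1) U) n) =
        fun n => (π : PowerSeries ℂ) * XMD.act φ (XMD.mul P W) n := by
      rw [← XMD.act_mu, ← XMD.act_mu, XMD.act_mul, hF, ← XMD.act_mul, hUW, XMD.act_mul,
        ← hPQ, ← XMD.act_mul]
    funext n
    exact mul_left_cancel₀ hπ' (congrFun key n)
end
end

section
/- For every n ∈ ℕ, the following identity holds in ℂ[[x]]: (1−x)^{2n+1} · Σ_{k≥0} ((n+1)_k)²/(k!)² · x^k = Σ_{i=0}^{n} binom(n,i)² · x^i. Equivalently, Φ_n(x) := ₂F₁(n+1,n+1;1;x) satisfies Φ_n(x) = ( Σ_{i=0}^{n} binom(n,i)² x^i ) / (1−x)^{2n+1}. -/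
noncomputable section

open Finset PowerSeries

/-- `Φ_n(x) = ₂F₁(n+1,n+1;1;x) = Σ_{k≥0} ((n+1)_k)²/(k!)² x^k`. -/
def Phi (n : ℕ) : PowerSeries ℂ :=
  PowerSeries.mk fun k => (poch ((n : ℂ) + 1) k) ^ 2 / ((Nat.factorial k : ℂ)) ^ 2

/-- The hypergeometric operator. -/
def hypOp (c d : ℂ) (F : PowerSeries ℂ) : PowerSeries ℂ :=
  X * ((1 - X) * d⁄dX ℂ (d⁄dX ℂ F)) + (1 - C c * X) * d⁄dX ℂ F - C d * F

theorem coeff_hypOp (c d : ℂ) (F : PowerSeries ℂ) (k : ℕ) :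
    coeff k (hypOp c d F) = ((k : ℂ) + 1) ^ 2 * coeff (k + 1) F
      - ((k : ℂ) ^ 2 + (c - 1) * k + d) * coeff k F := by
  have h : hypOp c d F = X * d⁄dX ℂ (d⁄dX ℂ F) - X * (X * d⁄dX ℂ (d⁄dX ℂ F))
      + d⁄dX ℂ F - C c * (X * d⁄dX ℂ F) - C d * F := by
    unfold hypOp; ring
  rw [h]
  rcases k with _ | _ | k
  · simp only [map_sub, map_add, coeff_C_mul, coeff_derivative, zero_add, coeff_zero_X_mul]
    push_cast; ring
  · simp only [map_sub, map_add, coeff_succ_X_mul, coeff_C_mul, coeff_derivative, zero_add,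
      coeff_zero_X_mul]
    push_cast; ring
  · simp only [map_sub, map_add, coeff_succ_X_mul, coeff_C_mul, coeff_derivative]
    push_cast; ring

theorem hypOp_Phi (n : ℕ) : hypOp (2 * n + 3) ((n + 1) ^ 2) (Phi n) = 0 := by
  ext k
  rw [coeff_hypOp]
  have h1 : (Nat.factorial k : ℂ) ≠ 0 := by exact_mod_cast Nat.factorial_ne_zero k
  have h2 : (k : ℂ) + 1 ≠ 0 := by exact_mod_cast Nat.succ_ne_zero k
  simp only [Phi, coeff_mk, poch, Nat.factorial_succ, map_zero]
  push_cast
  field_simp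
  ring

theorem hypOp_G (n : ℕ) :
    hypOp (1 - 2 * n) (n ^ 2) ((1 - X : PowerSeries ℂ) ^ (2 * n + 1) * Phi n) = 0 := by
  have hu : (1 - X : PowerSeries ℂ) ≠ 0 := by
    intro h
    have := congrArg (coeff 0) h
    simp at this
  have hΦ := hypOp_Phi n
  set F := Phi n
  set G := (1 - X : PowerSeries ℂ) ^ (2 * n + 1) * F with hG
  have hd : ∀ H : PowerSeries ℂ, (1 - X) * d⁄dX ℂ ((1 - X : PowerSeries ℂ) ^ (2 * n + 1) * H)
      = (1 - X : PowerSeries ℂ) ^ (2 * n + 1) *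
        ((1 - X) * d⁄dX ℂ H - (2 * (n : PowerSeries ℂ) + 1) * H) := by
    intro H
    simp only [Derivation.leibniz, Derivation.leibniz_pow, smul_eq_mul, nsmul_eq_mul, map_sub,
      derivative_X, Derivation.map_one_eq_zero, Nat.add_sub_cancel]
    push_cast
    ring
  have h1 := hd F
  rw [← hG] at h1
  have h2 := hd ((1 - X) * d⁄dX ℂ F - (2 * (n : PowerSeries ℂ) + 1) * F)
  rw [← h1] at h2
  have hn : d⁄dX ℂ (2 * (n : PowerSeries ℂ) + 1) = 0 := by
    have := (d⁄dX ℂ).map_natCast (2 * n + 1)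
    push_cast at this
    exact this
  simp only [Derivation.leibniz, smul_eq_mul, map_sub,
      derivative_X, Derivation.map_one_eq_zero, hn] at h2
  apply mul_left_cancel₀ hu
  unfold hypOp at hΦ ⊢
  simp only [map_sub, map_add, map_mul, map_pow, map_natCast, map_one, map_ofNat] at hΦ ⊢
  generalize hp : (1 - X : PowerSeries ℂ) ^ (2 * n + 1) = p at *
  linear_combination X * h2 + (1 - (1 - 2 * (n : PowerSeries ℂ)) * X + X) * h1
    + (1 - X) * p * hΦ - n ^ 2 * (1 - X) * hG

/-- `(1−x)^{2n+1} Φ_n(x) = Σ_{i=0}^{n} binom(n,i)² x^i` in `ℂ[[x]]`. -/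
theorem one_sub_pow_mul_Phi (n : ℕ) :
    (1 - PowerSeries.X : PowerSeries ℂ) ^ (2 * n + 1) * Phi n =
      ∑ i ∈ range (n + 1), ((n.choose i : ℂ)) ^ 2 • (PowerSeries.X : PowerSeries ℂ) ^ i := by
  have hG := hypOp_G n
  have key : ∀ k, coeff k ((1 - X : PowerSeries ℂ) ^ (2 * n + 1) * Phi n)
      = (n.choose k : ℂ) ^ 2 := by
    intro k
    induction k with
    | zero =>
      have h0 : constantCoeff (Phi n) = 1 := by
        rw [← coeff_zero_eq_constantCoeff_apply]
        simp only [Phi, coeff_mk, poch, Nat.factorial_zero]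
        simp
      simp [h0]
    | succ k ih =>
      have h := congrArg (coeff k) hG
      rw [coeff_hypOp, ih, map_zero] at h
      have h2 : (k : ℂ) + 1 ≠ 0 := by exact_mod_cast Nat.succ_ne_zero k
      have h3 : (n.choose (k + 1) : ℂ) * (k + 1) = n.choose k * (n - k) := by
        rcases le_or_gt k n with hk | hk
        · have := Nat.choose_succ_right_eq n k
          rw [← Nat.cast_sub hk]
          exact_mod_cast this
        · simp [Nat.choose_eq_zero_of_lt hk, Nat.choose_eq_zero_of_lt (Nat.lt_succ_of_lt hk)]
      apply mul_left_cancel₀ (pow_ne_zero 2 h2)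
      linear_combination h - (n.choose (k + 1) * (k + 1) + n.choose k * (n - k)) * h3
  ext k
  rw [key, map_sum]
  simp only [coeff_smul, coeff_X_pow, smul_eq_mul, mul_ite, mul_one, mul_zero]
  rw [Finset.sum_ite_eq]
  split_ifs with h
  · rfl
  · rw [Nat.choose_eq_zero_of_lt (by simpa using h)]; simp
end
end

section
/- For n ∈ ℕ, let Φ_n(x) = ₂F₁(n+1,n+1;1;x) = Σ_{k≥0} ((n+1)_k)²/(k!)² x^k ∈ ℂ[[x]]. Let n, t, s ∈ ℕ with t ≤ n and s ≤ n, and let A_0,…,A_t, B_0,…,B_s ∈ ℂ be such that Σ_{m=0}^{t} A_m·Φ_{n−m}(x) = x·Σ_{m=0}^{s} B_m·Φ_{n−m}(x) as formal power series. Then A_0 = 0 and B_0 = 0. (Consequently, the family (Φ_n) satisfies no nontrivial relation of type (X), i.e., no linear recurrence in n whose coefficients are polynomials of degree at most 1 in x.) -/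
noncomputable section

open Finset PowerSeries

/-- The monic polynomial `(X+c)(X+c+1)⋯(X+c+j-1)`. -/
def WW (c : ℂ) (j : ℕ) : Polynomial ℂ :=
  ∏ i ∈ range j, (Polynomial.X + Polynomial.C (c + i))

lemma WW_monic (c : ℂ) (j : ℕ) : (WW c j).Monic :=
  Polynomial.monic_prod_of_monic _ _ fun _ _ => Polynomial.monic_X_add_C _

lemma WW_natDegree (c : ℂ) (j : ℕ) : (WW c j).natDegree = j := by
  unfold WW
  rw [Polynomial.natDegree_prod_of_monic _ _ fun _ _ => Polynomial.monic_X_add_C _]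
  simp only [Polynomial.natDegree_X_add_C]
  simp

lemma WW_sq_natDegree (c : ℂ) (j : ℕ) : (WW c j ^ 2).natDegree = 2 * j := by
  rw [(WW_monic c j).natDegree_pow, WW_natDegree]

lemma WW_nextCoeff (c : ℂ) (j : ℕ) : (WW c j).nextCoeff = ∑ i ∈ range j, (c + i) := by
  unfold WW
  rw [Polynomial.Monic.nextCoeff_prod _ _ fun _ _ => Polynomial.monic_X_add_C _]
  simp only [Polynomial.nextCoeff_X_add_C]

lemma WW_coeff_top (c : ℂ) (n : ℕ) : (WW c n ^ 2).coeff (2 * n) = 1 := by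
  have h := ((WW_monic c n).pow 2).coeff_natDegree
  rwa [WW_sq_natDegree] at h

lemma WW_coeff_next (c : ℂ) (n : ℕ) (hn : 1 ≤ n) :
    (WW c n ^ 2).coeff (2 * n - 1) = 2 * ∑ i ∈ range n, (c + i) := by
  have h := (WW_monic c n).nextCoeff_pow 2
  rw [Polynomial.nextCoeff_of_natDegree_pos (by rw [WW_sq_natDegree]; omega),
    WW_sq_natDegree, WW_nextCoeff] at h
  rw [h]; simp

lemma WW_succ (c : ℂ) (j : ℕ) :
    WW c (j + 1) = WW c j * (Polynomial.X + Polynomial.C (c + j)) := by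
  simp [WW, prod_range_succ]

lemma WW_shift (x : ℂ) (j : ℕ) : (WW 0 j).eval (x + 1) = (WW 1 j).eval x := by
  simp only [WW, Polynomial.eval_prod]
  refine prod_congr rfl fun i _ => ?_
  simp; ring

lemma poch_fact (n k : ℕ) :
    poch ((n : ℂ) + 1) k * (n.factorial : ℂ) = ((n + k).factorial : ℂ) := by
  induction k with
  | zero => simp [poch]
  | succ k ih =>
    rw [poch, ← add_assoc, Nat.factorial_succ]
    push_cast
    rw [← ih]; ring

lemma WW_fact (n k : ℕ) :
    (WW 1 n).eval (k : ℂ) * (k.factorial : ℂ) = ((n + k).factorial : ℂ) := by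
  induction n with
  | zero => simp [WW]
  | succ n ih =>
    rw [WW_succ, show n + 1 + k = (n + k) + 1 by ring, Nat.factorial_succ]
    push_cast
    rw [← ih]; simp; ring

lemma coeff_Phi (n k : ℕ) :
    PowerSeries.coeff k (Phi n) = (WW 1 n ^ 2).eval (k : ℂ) / (n.factorial : ℂ) ^ 2 := by
  have h1 : (n.factorial : ℂ) ≠ 0 := by exact_mod_cast n.factorial_ne_zero
  have h2 : (k.factorial : ℂ) ≠ 0 := by exact_mod_cast k.factorial_ne_zero
  have h := (poch_fact n k).trans (WW_fact n k).symm
  rw [Phi, PowerSeries.coeff_mk, Polynomial.eval_pow, div_eq_div_iff (by positivity) (by positivity),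
    ← mul_pow, ← mul_pow, h]

/-- The polynomial attached to a linear combination. -/
def combo (c : ℂ) (n t : ℕ) (A : ℕ → ℂ) : Polynomial ℂ :=
  ∑ m ∈ range (t + 1), Polynomial.C (A m / ((n - m).factorial : ℂ) ^ 2) * WW c (n - m) ^ 2

lemma combo_coeff (c : ℂ) (n t : ℕ) (ht : t ≤ n) (A : ℕ → ℂ) (d : ℕ) (hd : 2 * n ≤ d + 1) :
    (combo c n t A).coeff d = A 0 / (n.factorial : ℂ) ^ 2 * (WW c n ^ 2).coeff d := by
  rw [combo, Polynomial.finsetSum_coeff, sum_range_succ', sum_eq_zero]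
  · simp
  · intro m hm
    have := mem_range.1 hm
    rw [Polynomial.coeff_C_mul, Polynomial.coeff_eq_zero_of_natDegree_lt, mul_zero]
    rw [WW_sq_natDegree]; omega

lemma coeff_sum (n t k : ℕ) (A : ℕ → ℂ) :
    PowerSeries.coeff k (∑ m ∈ range (t + 1), A m • Phi (n - m)) =
      (combo 1 n t A).eval (k : ℂ) := by
  rw [combo, map_sum, Polynomial.eval_finsetSum]
  refine sum_congr rfl fun m _ => ?_
  rw [PowerSeries.coeff_smul, coeff_Phi, Polynomial.eval_mul, Polynomial.eval_C]
  simp only [smul_eq_mul]; ring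

lemma combo_shift (n t : ℕ) (A : ℕ → ℂ) (x : ℂ) :
    (combo 0 n t A).eval (x + 1) = (combo 1 n t A).eval x := by
  simp only [combo, Polynomial.eval_finsetSum, Polynomial.eval_mul, Polynomial.eval_pow, WW_shift,
    Polynomial.eval_C]

/-- The family `(Φ_n)` satisfies no nontrivial relation of type (X): if
`Σ_{m=0}^{t} A_m Φ_{n−m} = x Σ_{m=0}^{s} B_m Φ_{n−m}` with `t, s ≤ n`, then
`A_0 = 0` and `B_0 = 0`. -/
theorem Phi_no_X_relation (n t s : ℕ) (ht : t ≤ n) (hs : s ≤ n)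
    (A B : ℕ → ℂ)
    (hrel : ∑ m ∈ range (t + 1), A m • Phi (n - m) =
      PowerSeries.X * ∑ m ∈ range (s + 1), B m • Phi (n - m)) :
    A 0 = 0 ∧ B 0 = 0 := by
  have hf : (n.factorial : ℂ) ^ 2 ≠ 0 := pow_ne_zero _ (by exact_mod_cast n.factorial_ne_zero)
  have key : combo 1 n t A = combo 0 n s B := by
    refine Polynomial.eq_of_infinite_eval_eq _ _
      (Set.Infinite.mono ?_ (Set.infinite_range_of_injective
        (f := fun k : ℕ => ((k + 1 : ℕ) : ℂ)) ?_))
    · rintro _ ⟨k, rfl⟩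
      have h := congrArg (PowerSeries.coeff (k + 1)) hrel
      rw [PowerSeries.coeff_succ_X_mul, coeff_sum, coeff_sum, ← combo_shift n s] at h
      simpa using h
    · intro a b h
      simpa using h
  have h0 : A 0 = B 0 := by
    have h := congrArg (fun p => Polynomial.coeff p (2 * n)) key
    simp only [combo_coeff _ n t ht A (2 * n) (by omega),
      combo_coeff _ n s hs B (2 * n) (by omega), WW_coeff_top] at h
    simpa using (div_left_inj' hf).1 (by simpa using h)
  have hA : A 0 = 0 := by
    rcases Nat.eq_zero_or_pos n with rfl | hn
    · obtain rfl : t = 0 := by omega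
      have h := congrArg (PowerSeries.coeff 0) hrel
      rw [coeff_sum] at h
      simpa [combo, WW] using h
    · have h := congrArg (fun p => Polynomial.coeff p (2 * n - 1)) key
      simp only [combo_coeff _ n t ht A (2 * n - 1) (by omega),
        combo_coeff _ n s hs B (2 * n - 1) (by omega), WW_coeff_next _ n hn, ← h0,
        sum_add_distrib] at h
      have hn' : (n : ℂ) ≠ 0 := by exact_mod_cast hn.ne'
      have h3 : A 0 / (n.factorial : ℂ) ^ 2 * (2 * n) = 0 := by
        simp only [sum_const, card_range, nsmul_eq_mul] at h
        linear_combination h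
      simpa [hn', hf, Nat.factorial_ne_zero] using h3
  exact ⟨hA, h0 ▸ hA⟩
end
end

section
/- For an integer n ≥ 1, let F_n(x) = ₁F₂(n+2; n, 1; x) = Σ_{k≥0} (n+k)(n+k+1)/(n(n+1)·(k!)²) · x^k ∈ ℂ[[x]]. Define the operators on sequences (G_n)_{n≥1} of formal power series: (T G)_n = ((n+2)/n)·G_{n+1} − G_n and (Δ G)_n = G_{n+1} − G_n. Then the following two identities hold in ℂ[[x]] for every n ≥ 1: (i) (1/2)·(T(T(xF)))_{n+1} = (n+1)·((n+1)/2+1)·(F_{n+2} − F_{n+1}) − n·(n/2+1)·(F_{n+1} − F_n), where xF denotes the sequence (x·F_n); (ii) −(n/2+1)·(F_{n+1}' − F_n') = ((n+2)/(2n))·( ((n+3)/(n+1))·F_{n+2} − F_{n+1} ), where ' denotes the formal derivative with respect to x. (These are the type-(X) and type-(D) relations (1/2)S_n((n+2)/n·S_n−1)²(xF_n) = (S_n−1)n(n/2+1)(S_n−1)(F_n) and −(n/2+1)(S_n−1)(F_n') = ((n+2)/(2n))S_n((n+2)/n·S_n−1)(F_n).) -/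
noncomputable section

open Finset PowerSeries

/-- `F_n(x) = ₁F₂(n+2; n, 1; x) = Σ_{k≥0} (n+k)(n+k+1)/(n(n+1)(k!)²) x^k`. -/
def Fser (n : ℕ) : PowerSeries ℂ :=
  PowerSeries.mk fun k =>
    (((n : ℂ) + k) * ((n : ℂ) + k + 1)) /
      ((n : ℂ) * ((n : ℂ) + 1) * ((Nat.factorial k : ℂ)) ^ 2)

/-- The operator `(T G)_n = ((n+2)/n) G_{n+1} − G_n`. -/
def Tmix (G : ℕ → PowerSeries ℂ) : ℕ → PowerSeries ℂ := fun n =>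
  (((n : ℂ) + 2) / (n : ℂ)) • G (n + 1) - G n

/-- The operator `(Δ G)_n = G_{n+1} − G_n`. -/
def Dmix (G : ℕ → PowerSeries ℂ) : ℕ → PowerSeries ℂ := fun n =>
  G (n + 1) - G n

/-- The type-(X) and type-(D) relations
`(1/2) S_n ((n+2)/n ⋅ S_n − 1)² (x F_n) = (S_n − 1) n (n/2+1) (S_n − 1)(F_n)` and
`−(n/2+1)(S_n − 1)(F_n') = ((n+2)/(2n)) S_n ((n+2)/n ⋅ S_n − 1)(F_n)`. -/
theorem Fser_X_and_D (n : ℕ) (hn : 1 ≤ n) :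
    ((1 / 2 : ℂ) • Tmix (Tmix fun k => PowerSeries.X * Fser k) (n + 1) =
      (((n : ℂ) + 1) * (((n : ℂ) + 1) / 2 + 1)) • (Fser (n + 2) - Fser (n + 1)) -
        ((n : ℂ) * ((n : ℂ) / 2 + 1)) • (Fser (n + 1) - Fser n)) ∧
    (-(((n : ℂ) / 2 + 1)) • (PowerSeries.derivativeFun (Fser (n + 1)) -
        PowerSeries.derivativeFun (Fser n)) =
      (((n : ℂ) + 2) / (2 * (n : ℂ))) •
        ((((n : ℂ) + 3) / ((n : ℂ) + 1)) • Fser (n + 2) - Fser (n + 1))) := by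
  have h0 : (n : ℂ) ≠ 0 := by exact_mod_cast (by omega : n ≠ 0)
  have h1 : (n : ℂ) + 1 ≠ 0 := by exact_mod_cast (by omega : n + 1 ≠ 0)
  have h2 : (n : ℂ) + 2 ≠ 0 := by exact_mod_cast (by omega : n + 2 ≠ 0)
  have h3 : (n : ℂ) + 3 ≠ 0 := by exact_mod_cast (by omega : n + 3 ≠ 0)
  have h4 : (n : ℂ) + 4 ≠ 0 := by exact_mod_cast (by omega : n + 4 ≠ 0)
  have e11 : (n : ℂ) + 1 + 1 = n + 2 := by ring
  have e12 : (n : ℂ) + 1 + 2 = n + 3 := by ring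
  have e21 : (n : ℂ) + 2 + 1 = n + 3 := by ring
  have e22 : (n : ℂ) + 2 + 2 = n + 4 := by ring
  have e31 : (n : ℂ) + 3 + 1 = n + 4 := by ring
  constructor
  · ext m
    cases m with
    | zero =>
      simp only [Tmix, Fser, map_sub, PowerSeries.coeff_smul, PowerSeries.coeff_zero_X_mul,
        PowerSeries.coeff_mk, smul_eq_mul, Nat.factorial]
      push_cast
      simp only [add_zero, e11, e12, e21, e22, e31]
      field_simp
      ring
    | succ k =>
      have hk : (k : ℂ) + 1 ≠ 0 := by exact_mod_cast (by omega : k + 1 ≠ 0)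
      have hf : (Nat.factorial k : ℂ) ≠ 0 := by exact_mod_cast Nat.factorial_ne_zero k
      simp only [Tmix, Fser, map_sub, PowerSeries.coeff_smul, PowerSeries.coeff_succ_X_mul,
        PowerSeries.coeff_mk, smul_eq_mul, Nat.factorial_succ]
      push_cast
      simp only [e11, e12, e21, e22, e31]
      field_simp
      ring
  · ext k
    have hk : (k : ℂ) + 1 ≠ 0 := by exact_mod_cast (by omega : k + 1 ≠ 0)
    have hf : (Nat.factorial k : ℂ) ≠ 0 := by exact_mod_cast Nat.factorial_ne_zero k
    have hd : ∀ f : PowerSeries ℂ, PowerSeries.coeff k (PowerSeries.derivativeFun f) =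
        PowerSeries.coeff (k + 1) f * ((k : ℂ) + 1) := fun f =>
      PowerSeries.coeff_derivative f k
    simp only [Fser, map_sub, PowerSeries.coeff_smul, hd,
      PowerSeries.coeff_mk, smul_eq_mul, Nat.factorial_succ]
    push_cast
    simp only [e11, e12, e21, e22, e31]
    field_simp
    ring
end
end

section
/- For an integer n ≥ 1, let F_n(x) = ₁F₂(n+2; n, 1; x) = Σ_{k≥0} (n+k)(n+k+1)/(n(n+1)·(k!)²) · x^k ∈ ℂ[[x]]. Then the family (F_n)_{n≥1} satisfies no relation of type (M): there do not exist a nonzero polynomial π ∈ ℂ[x], integers s, t ≥ 0, and rational functions E_{−s},…,E_t ∈ ℂ(n), such that π(x)·F_n'(x) = Σ_{j=−s}^{t} E_j(n)·F_{n+j}(x) holds in ℂ[[x]] for all sufficiently large n (with ' the formal derivative with respect to x). -/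
noncomputable section

open Finset PowerSeries

noncomputable def Pterm (n i : ℕ) : Polynomial ℂ :=
  (Polynomial.X - Polynomial.C (i : ℂ)) * (Polynomial.X - Polynomial.C ((i : ℂ) - n)) *
    (Polynomial.X - Polynomial.C ((i : ℂ) - n - 1)) * (descPochhammer ℂ i) ^ 2

lemma Pterm_monic (n i : ℕ) : (Pterm n i).Monic := by
  unfold Pterm
  exact (((Polynomial.monic_X_sub_C _).mul (Polynomial.monic_X_sub_C _)).mul
    (Polynomial.monic_X_sub_C _)).mul ((monic_descPochhammer ℂ i).pow 2)

lemma Pterm_natDegree (n i : ℕ) : (Pterm n i).natDegree = 2 * i + 3 := by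
  have h2 := ((Polynomial.monic_X_sub_C (i : ℂ)).mul (Polynomial.monic_X_sub_C ((i : ℂ) - n)))
  have h3 := h2.mul (Polynomial.monic_X_sub_C ((i : ℂ) - n - 1))
  unfold Pterm
  rw [h3.natDegree_mul ((monic_descPochhammer ℂ i).pow 2),
    h2.natDegree_mul (Polynomial.monic_X_sub_C _),
    (Polynomial.monic_X_sub_C _).natDegree_mul (Polynomial.monic_X_sub_C _),
    (monic_descPochhammer ℂ i).natDegree_pow, descPochhammer_natDegree]
  simp only [Polynomial.natDegree_X_sub_C]
  ring

lemma Pterm_eval (n i k : ℕ) (hn : 1 ≤ n) :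
    (Pterm n i).eval ((k : ℂ) + 1) =
      (n : ℂ) * (n + 1) * (((k + 1).factorial : ℕ) : ℂ) ^ 2 *
        (if i ≤ k then PowerSeries.coeff (k - i) (PowerSeries.derivativeFun (Fser n)) else 0) := by
  have hd : (descPochhammer ℂ i).eval ((k : ℂ) + 1) = ((k + 1).descFactorial i : ℕ) := by
    have := descPochhammer_eval_eq_descFactorial ℂ (k + 1) i
    rw [← this]; push_cast; rfl
  have hn0 : (n : ℂ) ≠ 0 := by exact_mod_cast (by omega : n ≠ 0)
  have hn1 : (n : ℂ) + 1 ≠ 0 := by exact_mod_cast (by omega : n + 1 ≠ 0)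
  simp only [Pterm, Polynomial.eval_mul, Polynomial.eval_sub, Polynomial.eval_X,
    Polynomial.eval_C, Polynomial.eval_pow, hd]
  split_ifs with h
  · obtain ⟨m, rfl⟩ := Nat.exists_eq_add_of_le h
    have hf : (m + 1).factorial * (i + m + 1).descFactorial i = (i + m + 1).factorial := by
      have := Nat.factorial_mul_descFactorial (n := i + m + 1) (k := i) (by omega)
      rwa [show i + m + 1 - i = m + 1 by omega] at this
    rw [← hf]
    have hm : (((m + 1).factorial : ℕ) : ℂ) ≠ 0 := by exact_mod_cast Nat.factorial_ne_zero _
    rw [show i + m - i = m by omega, show PowerSeries.coeff m (PowerSeries.derivativeFun (Fser n)) =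
      PowerSeries.coeff (m + 1) (Fser n) * ((m : ℂ) + 1) from PowerSeries.coeff_derivative (Fser n) m, Fser, PowerSeries.coeff_mk]
    push_cast
    field_simp
    ring
  · rw [mul_zero]
    rcases Nat.lt_or_ge (k + 1) i with h' | h'
    · rw [Nat.descFactorial_eq_zero_iff_lt.2 h']; simp
    · have : i = k + 1 := by omega
      subst this
      simp

noncomputable def Rpoly (c : ℂ) (S : Finset ℤ) (u v : ℤ → ℂ) : Polynomial ℂ :=
  Polynomial.X ^ 2 * ∑ j ∈ S, Polynomial.C (c * u j) *
    ((Polynomial.X + Polynomial.C (v j - 1)) * (Polynomial.X + Polynomial.C (v j)))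

lemma Rpoly_natDegree (c : ℂ) (S : Finset ℤ) (u v : ℤ → ℂ) :
    (Rpoly c S u v).natDegree ≤ 4 := by
  unfold Rpoly
  refine Polynomial.natDegree_mul_le_of_le (m := 2) (n := 2) (by simp) ?_
  refine Polynomial.natDegree_sum_le_of_forall_le _ _ fun j _ => ?_
  compute_degree

lemma coeff_poly_mul (p : Polynomial ℂ) (D : PowerSeries ℂ) (k : ℕ) :
    PowerSeries.coeff k ((p : PowerSeries ℂ) * D) =
      ∑ i ∈ Finset.range (p.natDegree + 1),
        p.coeff i * (if i ≤ k then PowerSeries.coeff (k - i) D else 0) := by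
  conv_lhs => rw [p.as_sum_range_C_mul_X_pow]
  have : ((∑ i ∈ Finset.range (p.natDegree + 1), Polynomial.C (p.coeff i) * Polynomial.X ^ i :
      Polynomial ℂ) : PowerSeries ℂ) = ∑ i ∈ Finset.range (p.natDegree + 1),
        PowerSeries.C (p.coeff i) * PowerSeries.X ^ i := by
    rw [← Polynomial.coeToPowerSeries.ringHom_apply, map_sum]
    simp
  rw [this, Finset.sum_mul, map_sum]
  refine Finset.sum_congr rfl fun i _ => ?_
  rw [mul_assoc, PowerSeries.coeff_C_mul, PowerSeries.coeff_X_pow_mul']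

theorem Fser_no_M_relation :
    ¬ ∃ (π : Polynomial ℂ) (s t : ℕ) (E : ℤ → RatFunc ℂ) (N : ℕ),
      π ≠ 0 ∧
      ∀ n : ℕ, N ≤ n → (s:ℕ) + 1 ≤ n →
        (π : PowerSeries ℂ) * PowerSeries.derivativeFun (Fser n) =
          ∑ j ∈ Finset.Icc (-(s : ℤ)) (t : ℤ),
            RatFunc.eval (RingHom.id ℂ) (n : ℂ) (E j) • Fser ((n : ℤ) + j).toNat := by
  rintro ⟨p, s, t, E, N, hp, h⟩
  obtain ⟨n, hN, hs⟩ : ∃ n : ℕ, N ≤ n ∧ s + 1 ≤ n := ⟨N + s + 1, by omega, by omega⟩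
  have hn : 1 ≤ n := by omega
  specialize h n hN hs
  set v : ℤ → ℂ := fun j => ((((n : ℤ) + j).toNat : ℕ) : ℂ) with hv
  set u : ℤ → ℂ := fun j => RatFunc.eval (RingHom.id ℂ) (n : ℂ) (E j) / (v j * (v j + 1)) with hu
  set L : Polynomial ℂ := ∑ i ∈ Finset.range (p.natDegree + 1),
    Polynomial.C (p.coeff i) * Pterm n i with hL
  set R := Rpoly ((n : ℂ) * (n + 1)) (Finset.Icc (-(s : ℤ)) (t : ℤ)) u v with hR
  have key : ∀ k : ℕ, L.eval ((k : ℂ) + 1) = R.eval ((k : ℂ) + 1) := by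
    intro k
    have hk := congrArg (PowerSeries.coeff k) h
    rw [coeff_poly_mul, map_sum] at hk
    have h1 : L.eval ((k : ℂ) + 1) = (n : ℂ) * (n + 1) * (((k + 1).factorial : ℕ) : ℂ) ^ 2 *
        ∑ i ∈ Finset.range (p.natDegree + 1), p.coeff i *
          (if i ≤ k then PowerSeries.coeff (k - i) (PowerSeries.derivativeFun (Fser n)) else 0) := by
      rw [hL, Polynomial.eval_finset_sum, Finset.mul_sum]
      refine Finset.sum_congr rfl fun i _ => ?_
      rw [Polynomial.eval_mul, Polynomial.eval_C, Pterm_eval n i k hn]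
      ring
    rw [h1, hk, hR, Rpoly, Polynomial.eval_mul, Polynomial.eval_finset_sum, Finset.mul_sum,
      Finset.mul_sum]
    refine Finset.sum_congr rfl fun j _ => ?_
    have hf : ((k.factorial : ℕ) : ℂ) ≠ 0 := by exact_mod_cast Nat.factorial_ne_zero _
    simp only [Polynomial.eval_mul, Polynomial.eval_add, Polynomial.eval_X,
      Polynomial.eval_C, Polynomial.eval_pow, PowerSeries.coeff_smul, Fser, PowerSeries.coeff_mk,
      Nat.factorial_succ, hu, smul_eq_mul]
    change _ * (_ * ((v j + k) * (v j + k + 1) / (v j * (v j + 1) * (k.factorial : ℂ) ^ 2))) = _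
    rw [div_mul_eq_div_div]
    push_cast
    field_simp
    ring
  have hLR : L = R := by
    refine Polynomial.eq_of_infinite_eval_eq _ _ ?_
    refine Set.Infinite.mono ?_ (Set.infinite_range_of_injective
      (f := fun k : ℕ => (k : ℂ) + 1) (fun a b hab => by simpa using hab))
    rintro _ ⟨k, rfl⟩
    exact key k
  have hlead : p.coeff p.natDegree ≠ 0 := by
    simpa using hp
  by_cases hd : p.natDegree = 0
  · have h1 : L.coeff 1 = R.coeff 1 := by rw [hLR]
    have hR1 : R.coeff 1 = 0 := by
      rw [hR, Rpoly, Polynomial.coeff_X_pow_mul']; simp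
    have hL1 : L.coeff 1 = p.coeff 0 * (n * (n + 1)) := by
      rw [hL, hd]
      have : Pterm n 0 = Polynomial.X * ((Polynomial.X + Polynomial.C (n : ℂ)) *
          (Polynomial.X + Polynomial.C ((n : ℂ) + 1))) := by
        simp [Pterm]; ring
      simp only [zero_add, Finset.sum_range_one, Polynomial.coeff_C_mul, this,
        Polynomial.coeff_X_mul, Polynomial.mul_coeff_zero]
      simp
    rw [hL1, hR1] at h1
    rw [hd] at hlead
    have hn0 : (n : ℂ) ≠ 0 := by exact_mod_cast (by omega : n ≠ 0)
    have hn1 : (n : ℂ) + 1 ≠ 0 := by exact_mod_cast (by omega : n + 1 ≠ 0)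
    exact mul_ne_zero hlead (mul_ne_zero hn0 hn1) h1
  · have h1 : L.coeff (2 * p.natDegree + 3) = R.coeff (2 * p.natDegree + 3) := by rw [hLR]
    rw [Polynomial.coeff_eq_zero_of_natDegree_lt (p := R)
      (lt_of_le_of_lt (Rpoly_natDegree _ _ _ _) (by omega)), hL, Finset.sum_range_succ,
      Polynomial.coeff_add, Polynomial.finset_sum_coeff, Finset.sum_eq_zero, zero_add,
      Polynomial.coeff_C_mul] at h1
    · have h2 := (Pterm_monic n p.natDegree).coeff_natDegree
      rw [Pterm_natDegree] at h2
      rw [h2, mul_one] at h1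
      exact hlead h1
    · intro i hi
      rw [Finset.mem_range] at hi
      rw [Polynomial.coeff_C_mul, Polynomial.coeff_eq_zero_of_natDegree_lt (p := Pterm n i), mul_zero]
      rw [Pterm_natDegree]; omega
end
end

section
/- (Mixed difference-differential equation for families I and II.) Let m ≥ 1 and p, q ≥ 0 be integers, λ ∈ ℂ, a_1,…,a_p, b_1,…,b_q ∈ ℂ, and ε₂ ∈ {−1,1}. For n ∈ ℕ, let F_n = {}_pF_{m+q}(a_1,…,a_p; Δ(m;λ+n), b_1,…,b_q; x) if ε₂ = 1 (family I), and F_n = {}_{m+p}F_q(Δ(m;1−λ−n), a_1,…,a_p; b_1,…,b_q; x) if ε₂ = −1 (family II). Assume that for every n ∈ ℕ no lower parameter of F_n is a nonpositive integer, so that each F_n is a well-defined formal power series in ℂ[[x]]. Then for every integer n ≥ 1, the identity x·F_n'(x) = ((n+λ−1)/(ε₂·m))·(F_{n−1}(x) − F_n(x)) holds in ℂ[[x]], where ' denotes the formal derivative with respect to x. -/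
noncomputable section

open Finset PowerSeries

/-- The generalized hypergeometric series `pFq((a_p); (b_q); x)` as a formal
power series, for upper parameters `as` and lower parameters `bs`. -/
def hyp (as bs : List ℂ) : PowerSeries ℂ :=
  PowerSeries.mk fun k =>
    (as.map fun a => poch a k).prod /
      ((bs.map fun b => poch b k).prod * (Nat.factorial k : ℂ))

/-- `Δ(m;z)`: the list of `m` parameters `z/m, (z+1)/m, …, (z+m−1)/m`. -/
def Δlist (m : ℕ) (z : ℂ) : List ℂ :=
  (List.range m).map fun j => (z + j) / (m : ℂ)

lemma poch_shift (a : ℂ) (k : ℕ) : a * poch (a + 1) k = poch a k * (a + k) := by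
  induction k with
  | zero => simp [poch]
  | succ k ih =>
    simp only [poch]
    rw [← mul_assoc, ih]
    push_cast
    ring

lemma poch_ne (a : ℂ) (h : ∀ j : ℕ, a + (j : ℂ) ≠ 0) (k : ℕ) : poch a k ≠ 0 := by
  induction k with
  | zero => simp [poch]
  | succ k ih => exact mul_ne_zero ih (h k)

lemma prod_poch_ne (l : List ℂ) (h : ∀ z ∈ l, ∀ j : ℕ, z + (j : ℂ) ≠ 0) (k : ℕ) :
    (l.map fun b => poch b k).prod ≠ 0 := by
  intro h0
  rw [List.prod_eq_zero_iff, List.mem_map] at h0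
  obtain ⟨z, hz, h1⟩ := h0
  exact poch_ne z (h z hz) k h1

lemma delta_shift (m : ℕ) (hm : 1 ≤ m) (z : ℂ) (k : ℕ) :
    z * ((Δlist m (z + 1)).map fun b => poch b k).prod
      = (z + m * k) * ((Δlist m z).map fun b => poch b k).prod := by
  obtain ⟨r, rfl⟩ : ∃ r, m = r + 1 := ⟨m - 1, by omega⟩
  have hr : ((r + 1 : ℕ) : ℂ) ≠ 0 := by exact_mod_cast Nat.succ_ne_zero r
  have key := poch_shift (z / ((r + 1 : ℕ) : ℂ)) k
  have e : ∀ w : ℂ, ((Δlist (r + 1) w).map fun b => poch b k).prod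
      = ∏ j ∈ Finset.range (r + 1), poch ((w + j) / ((r + 1 : ℕ) : ℂ)) k := by
    intro w
    rw [Δlist, List.map_map]
    have hl : (do let a ← List.range (r + 1); pure (a : ℂ)) = (List.range (r + 1)).map (fun a : ℕ => (a : ℂ)) := by
      simp [List.map_eq_flatMap]
    rw [hl, List.map_map]
    rfl
  rw [e, e, Finset.prod_range_succ, Finset.prod_range_succ']
  have h1 : (z + 1 + (r : ℂ)) / ((r + 1 : ℕ) : ℂ) = z / ((r + 1 : ℕ) : ℂ) + 1 := by
    field_simp
    push_cast
    ring
  have h2 : ∀ j : ℕ, z + 1 + (j : ℂ) = z + ((j + 1 : ℕ) : ℂ) := by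
    intro j
    push_cast
    ring
  rw [h1]
  simp only [h2]
  generalize (∏ j ∈ Finset.range r, poch ((z + ((j + 1 : ℕ) : ℂ)) / ((r + 1 : ℕ) : ℂ)) k) = Q
  simp only [Nat.cast_zero, add_zero]
  generalize poch (z / ((r + 1 : ℕ) : ℂ) + 1) k = A at *
  generalize poch (z / ((r + 1 : ℕ) : ℂ)) k = B at *
  generalize ((r + 1 : ℕ) : ℂ) = M at *
  field_simp at key
  linear_combination Q * key

lemma coeff_X_deriv (f : PowerSeries ℂ) (k : ℕ) :
    PowerSeries.coeff k (PowerSeries.X * PowerSeries.derivativeFun f)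
      = k * PowerSeries.coeff k f := by
  cases k with
  | zero => simp
  | succ k =>
    rw [PowerSeries.coeff_succ_X_mul, show PowerSeries.derivativeFun f = PowerSeries.derivative ℂ f from rfl, PowerSeries.coeff_derivative]
    push_cast
    ring

/-- Mixed difference-differential equation for families I and II:
`x F_n' = ((n+λ−1)/(ε₂ m)) (F_{n−1} − F_n)`. -/
theorem mixed_relation_families_I_II
    (m : ℕ) (hm : 1 ≤ m) (p q : ℕ) (lam : ℂ)
    (as bs : ℕ → ℂ) (e2 : ℂ) (he2 : e2 = 1 ∨ e2 = -1)
    (F : ℕ → PowerSeries ℂ)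
    (hFI : e2 = 1 → ∀ n : ℕ,
      F n = hyp ((List.range p).map as)
        (Δlist m (lam + n) ++ (List.range q).map bs))
    (hFII : e2 = -1 → ∀ n : ℕ,
      F n = hyp (Δlist m (1 - lam - n) ++ (List.range p).map as)
        ((List.range q).map bs))
    (hlow : ∀ n : ℕ, ∀ z ∈ (if e2 = 1 then Δlist m (lam + n) ++ (List.range q).map bs
        else (List.range q).map bs), ∀ j : ℕ, z + (j : ℂ) ≠ 0) :
    ∀ n : ℕ, 1 ≤ n →
      PowerSeries.X * PowerSeries.derivativeFun (F n) =
        (((n : ℂ) + lam - 1) / (e2 * m)) • (F (n - 1) - F n) := by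
  intro n hn
  obtain ⟨n, rfl⟩ : ∃ r, n = r + 1 := ⟨n - 1, by omega⟩
  have hm0 : (m : ℂ) ≠ 0 := by exact_mod_cast (by omega : m ≠ 0)
  ext k
  rw [coeff_X_deriv, PowerSeries.coeff_smul, map_sub, Nat.add_sub_cancel]
  have hk : (Nat.factorial k : ℂ) ≠ 0 := by exact_mod_cast Nat.factorial_ne_zero k
  rcases he2 with h | h
  · rw [hFI h, hFI h]
    have hl0 := hlow n
    have hl1 := hlow (n + 1)
    rw [if_pos h] at hl0 hl1
    have p0 := prod_poch_ne _ hl0 k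
    have p1 := prod_poch_ne _ hl1 k
    have key := delta_shift m hm (lam + n) k
    have hs : lam + n + 1 = lam + ((n + 1 : ℕ) : ℂ) := by push_cast; ring
    rw [hs] at key
    simp only [hyp, PowerSeries.coeff_mk, List.map_append, List.prod_append] at p0 p1 ⊢
    have hc : (((n + 1 : ℕ) : ℂ) + lam - 1) = lam + n := by push_cast; ring
    rw [hc, h, smul_eq_mul]
    generalize (List.map (fun b => poch b k) (Δlist m (lam + ((n + 1 : ℕ) : ℂ)))).prod = P1 at *
    generalize (List.map (fun b => poch b k) (Δlist m (lam + (n : ℂ)))).prod = P0 at *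
    generalize (List.map (fun b => poch b k) (List.map bs (List.range q))).prod = B at *
    generalize (List.map (fun b => poch b k) (List.map as (List.range p))).prod = A at *
    obtain ⟨p0, hB⟩ := mul_ne_zero_iff.mp p0
    obtain ⟨p1, -⟩ := mul_ne_zero_iff.mp p1
    field_simp
    linear_combination (-A) * key
  · rw [hFII h, hFII h]
    have key := delta_shift m hm (1 - lam - ((n + 1 : ℕ) : ℂ)) k
    have hs : 1 - lam - ((n + 1 : ℕ) : ℂ) + 1 = 1 - lam - (n : ℂ) := by push_cast; ring
    rw [hs] at key
    simp only [hyp, PowerSeries.coeff_mk, List.map_append, List.prod_append]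
    rw [h, smul_eq_mul]
    generalize (List.map (fun b => poch b k) (Δlist m (1 - lam - ((n + 1 : ℕ) : ℂ)))).prod = P1 at *
    generalize (List.map (fun b => poch b k) (Δlist m (1 - lam - (n : ℂ)))).prod = P0 at *
    generalize (List.map (fun b => poch b k) (List.map bs (List.range q))).prod * (Nat.factorial k : ℂ) = B at *
    generalize (List.map (fun b => poch b k) (List.map as (List.range p))).prod = A at *
    simp only [div_eq_mul_inv, mul_inv]
    generalize B⁻¹ = B' at *
    have hmm : (m : ℂ) * (m : ℂ)⁻¹ = 1 := mul_inv_cancel₀ hm0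
    push_cast at key ⊢
    norm_num
    linear_combination (-(A * B' * (m : ℂ)⁻¹)) * key - (k * A * B' * P1) * hmm
end
end
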